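/- Let q be a prime power, n > k ≥ 1, and let f(x) = Σ_{j=0}^{k} a_j x^{q^j} ∈ F_{q^n}[x] be a monic F_q-linearized polynomial of q-degree k (a_k = 1) which is not a monomial and satisfies a_0 = 0. Let v = min{ j : a_j ≠ 0 } and h = dim_{F_q} ker(f), and for i ≥ 1 let N_i = #{ m ∈ F_{q^n} : dim_{F_q} ker(f(x) − m·x) = i }. Then Σ_{i=1}^{n−1} N_i (q^i − 1)(q^i − q) ≥ q^n − (q^k − q − 1)(q^k − q − 2)·√(q^n) − 2q^{k−v} − q^k + q^{h+1} − q^h + 1. -/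

import Mathlib

/-!
An ordered pair of linearly independent elements of a common kernel `ker (f - m x)` is a pair
`(x, t x)` with `t ∉ F_q` and `f (t x) = t f x`, and the left-hand side counts such pairs. Dividing
the exponents of `f` by their greatest common divisor changes `q` to a power `Q`; then taking
`Q ^ w`-th roots, `w` being the lowest exponent that remains, and substituting `x = 1 / z` turns the
condition into a plane curve over `F_{q^n}`, monic in its second coordinate once the factor
`Y ^ Q - Y` is removed. Over all but a few `z ∈ F_{q^n}` the fibre consists of
`d = Q ^ (w + r) - Q` distinct geometric points, so a lower bound for the number of rational points
amounts to an upper bound for the number of points of these fibres that Frobenius moves. That bound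
is proved by Stepanov's method in Bombieri's form: since the Frobenius image of such a point is
another root of the same monic polynomial in `Y`, the divided difference of the curve vanishes
there, and a dimension count gives a polynomial of small weighted degree that vanishes at all moved
points without being a multiple of the curve.
-/

namespace Stepanov

open Polynomial Polynomial.Bivariate
open scoped PowerSeries

section SupportedOn

variable {R : Type*}

/-- The `R`-submodule of the bivariate polynomials `∑ aᵢₗ Xⁱ Yˡ` with `aᵢₗ = 0` for `(i, l) ∉ S`. -/
def supportedOn (R : Type*) [Semiring R] (S : Set (ℕ × ℕ)) : Submodule R R[X][Y] where
  carrier := {f | ∀ i l, (f.coeff l).coeff i ≠ 0 → (i, l) ∈ S}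
  zero_mem' := by simp
  add_mem' {f g} hf hg i l h := by
    rw [coeff_add, coeff_add] at h
    by_cases hfil : (f.coeff l).coeff i = 0
    · exact hg i l fun h0 => h (by rw [hfil, h0, add_zero])
    · exact hf i l hfil
  smul_mem' a f hf i l h := hf i l fun h0 => h (by rw [coeff_smul, coeff_smul, h0, smul_zero])

theorem supportedOn_mono [Semiring R] {S T : Set (ℕ × ℕ)} (h : S ⊆ T) :
    supportedOn R S ≤ supportedOn R T :=
  fun _ hf i l hil => h (hf i l hil)

theorem coeff_coeff_eq_zero [Semiring R] {S : Set (ℕ × ℕ)} {f : R[X][Y]}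
    (hf : f ∈ supportedOn R S) {x : ℕ × ℕ} (hx : x ∉ S) : (f.coeff x.2).coeff x.1 = 0 :=
  by_contra fun h => hx (hf _ _ h)

theorem coeff_coeff_sum [Semiring R] {ι : Type*} (s : Finset ι) (f : ι → R[X][Y]) (i l : ℕ) :
    ((∑ x ∈ s, f x).coeff l).coeff i = ∑ x ∈ s, ((f x).coeff l).coeff i := by
  rw [finsetSum_coeff, finsetSum_coeff]

theorem coeff_coeff_monomial [Semiring R] (x : ℕ × ℕ) (a : R) (i l : ℕ) :
    ((monomial x.2 (monomial x.1 a)).coeff l).coeff i = if (i, l) = x then a else 0 := by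
  obtain ⟨j, m⟩ := x
  rw [coeff_monomial]
  by_cases hl : m = l
  · simp [hl, coeff_monomial, eq_comm]
  · simp [hl, Ne.symm hl]

theorem coeff_coeff_sum_monomial [Semiring R] (S : Finset (ℕ × ℕ)) (a : ℕ × ℕ → R) (i l : ℕ) :
    ((∑ x ∈ S, monomial x.2 (monomial x.1 (a x))).coeff l).coeff i =
      if (i, l) ∈ S then a (i, l) else 0 := by
  rw [coeff_coeff_sum]
  simp_rw [coeff_coeff_monomial]
  exact Finset.sum_ite_eq S (i, l) a

theorem monomial_mem_supportedOn [Semiring R] {S : Set (ℕ × ℕ)} {x : ℕ × ℕ} (hx : x ∈ S) (a : R) :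
    monomial x.2 (monomial x.1 a) ∈ supportedOn R S := by
  intro i l h
  rw [coeff_coeff_monomial, ite_ne_right_iff] at h
  exact h.1 ▸ hx

theorem eq_sum_monomial [Semiring R] {S : Finset (ℕ × ℕ)} {f : R[X][Y]}
    (hf : f ∈ supportedOn R S) :
    f = ∑ x ∈ S, monomial x.2 (monomial x.1 ((f.coeff x.2).coeff x.1)) := by
  ext l i
  rw [coeff_coeff_sum_monomial S fun x => (f.coeff x.2).coeff x.1, ite_eq_left_iff.2]
  exact fun h => (coeff_coeff_eq_zero hf h).symm

open Pointwise in
theorem mul_mem_supportedOn [CommSemiring R] {S T : Set (ℕ × ℕ)} {f g : R[X][Y]}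
    (hf : f ∈ supportedOn R S) (hg : g ∈ supportedOn R T) : f * g ∈ supportedOn R (S + T) := by
  intro i l h
  rw [coeff_mul, finsetSum_coeff] at h
  obtain ⟨⟨l₁, l₂⟩, hl, h⟩ := Finset.exists_ne_zero_of_sum_ne_zero h
  rw [coeff_mul] at h
  obtain ⟨⟨i₁, i₂⟩, hi, h⟩ := Finset.exists_ne_zero_of_sum_ne_zero h
  rw [Finset.HasAntidiagonal.mem_antidiagonal] at hl hi
  exact Set.mem_add.2 ⟨_, hf _ _ (left_ne_zero_of_mul h), _, hg _ _ (right_ne_zero_of_mul h),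
    Prod.ext hi hl⟩

theorem supportedOn_finset_eq_span [Semiring R] (S : Finset (ℕ × ℕ)) :
    supportedOn R (S : Set (ℕ × ℕ)) = Submodule.span R
      ((basisMonomials R).smulTower (basisMonomials R[X]) '' (S : Set (ℕ × ℕ))) := by
  have hb : ∀ x : ℕ × ℕ, (basisMonomials R).smulTower (basisMonomials R[X]) x =
      monomial x.2 (monomial x.1 1) := fun x => by
    rw [Module.Basis.smulTower_apply, coe_basisMonomials, coe_basisMonomials, smul_monomial,
      smul_eq_mul, mul_one]
  refine le_antisymm (fun f hf => ?_) (Submodule.span_le.2 ?_)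
  · rw [eq_sum_monomial hf]
    refine Submodule.sum_mem _ fun x hx => ?_
    have hsmul : monomial x.2 (monomial x.1 ((f.coeff x.2).coeff x.1)) =
        (f.coeff x.2).coeff x.1 • (monomial x.2 (monomial x.1 1) : R[X][Y]) := by
      rw [smul_monomial, smul_monomial, smul_eq_mul, mul_one]
    rw [hsmul, ← hb]
    exact Submodule.smul_mem _ _ (Submodule.subset_span ⟨x, hx, rfl⟩)
  · rintro _ ⟨x, hx, rfl⟩
    rw [hb]
    exact monomial_mem_supportedOn hx 1

instance [Ring R] [Nontrivial R] (S : Finset (ℕ × ℕ)) :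
    Module.Finite R (supportedOn R (S : Set (ℕ × ℕ))) := by
  rw [supportedOn_finset_eq_span]
  exact .span_of_finite R (S.finite_toSet.image _)

theorem finrank_supportedOn [CommRing R] [Nontrivial R] (S : Finset (ℕ × ℕ)) :
    Module.finrank R (supportedOn R (S : Set (ℕ × ℕ))) = S.card := by
  classical
  set b := (basisMonomials R).smulTower (basisMonomials R[X])
  rw [supportedOn_finset_eq_span, ← Finset.coe_image, finrank_span_finset_eq_card,
    Finset.card_image_of_injective _ b.injective]
  rw [Finset.coe_image]
  exact (b.linearIndependent.linearIndepOn (S : Set (ℕ × ℕ))).id_image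

end SupportedOn

section WeightedDegree

variable {R : Type*}

/-- The bivariate polynomials of weighted degree at most `w`, for the weight `lam` of `X` and the
weight `1` of `Y`. -/
abbrev weightedDegreeLE (R : Type*) [Semiring R] (lam w : ℕ) : Submodule R R[X][Y] :=
  supportedOn R {x | lam * x.1 + x.2 ≤ w}

/-- The exponents `(i, l)` of the monomials `Xⁱ Yˡ` with `l < d` and weighted degree at most `w`;
the bound on `i` makes this a finite set and is automatic when `lam ≠ 0`. -/
def weightedBox (lam d w : ℕ) : Finset (ℕ × ℕ) :=
  {x ∈ Finset.range (w + 1) ×ˢ Finset.range d | lam * x.1 + x.2 ≤ w}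

theorem mem_weightedBox {lam d w : ℕ} (hlam : 0 < lam) {x : ℕ × ℕ} :
    x ∈ weightedBox lam d w ↔ x.2 < d ∧ lam * x.1 + x.2 ≤ w := by
  have : x.1 ≤ lam * x.1 := Nat.le_mul_of_pos_left _ hlam
  simp only [weightedBox, Finset.mem_filter, Finset.mem_product, Finset.mem_range]
  omega

open Pointwise in
theorem mul_mem_weightedDegreeLE [CommSemiring R] {lam w w' : ℕ} {f g : R[X][Y]}
    (hf : f ∈ weightedDegreeLE R lam w) (hg : g ∈ weightedDegreeLE R lam w') :
    f * g ∈ weightedDegreeLE R lam (w + w') := by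
  refine supportedOn_mono ?_ (mul_mem_supportedOn hf hg)
  rintro _ ⟨x, hx, y, hy, rfl⟩
  simp only [Set.mem_ofPred_eq, Prod.fst_add, Prod.snd_add] at hx hy ⊢
  linarith

theorem weightedDegreeLE_mono [Semiring R] {lam w w' : ℕ} (h : w ≤ w') :
    weightedDegreeLE R lam w ≤ weightedDegreeLE R lam w' :=
  supportedOn_mono fun _ hx => le_trans hx h

theorem pow_mem_weightedDegreeLE [CommSemiring R] {lam w : ℕ} {f : R[X][Y]}
    (hf : f ∈ weightedDegreeLE R lam w) (k : ℕ) :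
    f ^ k ∈ weightedDegreeLE R lam (k * w) := by
  induction k with
  | zero => exact monomial_mem_supportedOn (x := (0, 0)) (by simp) 1
  | succ k ih => rw [pow_succ, Nat.succ_mul]; exact mul_mem_weightedDegreeLE ih hf

theorem exists_mem_weightedDegreeLE [Semiring R] {lam : ℕ} (hlam : 0 < lam) (f : R[X][Y]) :
    ∃ w, f ∈ weightedDegreeLE R lam (lam * w) := by
  set W := lam * f.support.sup (fun l => (f.coeff l).natDegree) + f.natDegree
  refine ⟨W, fun i l h => ?_⟩
  have hl : f.coeff l ≠ 0 := fun h0 => h (by rw [h0, coeff_zero])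
  have hi : i ≤ f.support.sup fun l => (f.coeff l).natDegree :=
    (le_natDegree_of_ne_zero h).trans (Finset.le_sup (f := fun l => (f.coeff l).natDegree)
      (mem_support_iff.2 hl))
  calc lam * i + l ≤ W := add_le_add (Nat.mul_le_mul_left _ hi) (le_natDegree_of_ne_zero hl)
    _ ≤ lam * W := Nat.le_mul_of_pos_left _ hlam

theorem modByMonic_mem_weightedDegreeLE [CommRing R] {lam w : ℕ} {G : R[X][Y]} (hG : G.Monic)
    (hGw : G ∈ weightedDegreeLE R lam G.natDegree) {f : R[X][Y]}
    (hf : f ∈ weightedDegreeLE R lam w) : f %ₘ G ∈ weightedDegreeLE R lam w := by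
  induction hn : f.degree using WellFoundedLT.induction generalizing f with | _ n ih
  subst hn
  nontriviality R
  by_cases hdeg : G.degree ≤ f.degree ∧ f ≠ 0
  swap
  · rcases eq_or_ne f 0 with rfl | hf0
    · simp
    · rwa [(modByMonic_eq_self_iff hG).2 (lt_of_not_ge fun h => hdeg ⟨h, hf0⟩)]
  have hn := natDegree_le_natDegree hdeg.1
  set q := C f.leadingCoeff * X ^ (f.natDegree - G.natDegree)
  have hle : f.natDegree ≤ w := by
    have h0 : f.leadingCoeff.leadingCoeff ≠ 0 := by simpa using hdeg.2
    exact (Nat.le_add_left _ _).trans (hf _ _ h0)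
  have hq : q ∈ weightedDegreeLE R lam (w - G.natDegree) := by
    intro i l h
    rw [coeff_C_mul_X_pow] at h
    split_ifs at h with hl
    · have : lam * i + f.natDegree ≤ w := hf i _ h
      exact (show lam * i + l ≤ w - G.natDegree by omega)
    · exact absurd (coeff_zero i) h
  have hGq : G * q ∈ weightedDegreeLE R lam w :=
    weightedDegreeLE_mono (by omega) (mul_mem_weightedDegreeLE hGw hq)
  have hmod : f %ₘ G = (f - G * q) %ₘ G := by
    rw [sub_modByMonic, mul_comm, mul_self_modByMonic hG, sub_zero]
  rw [hmod]
  exact ih _ (div_wf_lemma hdeg hG) (Submodule.sub_mem _ hf hGq) rfl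

theorem modByMonic_mem_supportedOn_weightedBox [CommRing R] [Nontrivial R] {lam w : ℕ}
    (hlam : 0 < lam) {G : R[X][Y]} (hG : G.Monic) (hGw : G ∈ weightedDegreeLE R lam G.natDegree)
    {f : R[X][Y]} (hf : f ∈ weightedDegreeLE R lam w) :
    f %ₘ G ∈ supportedOn R (weightedBox lam G.natDegree w : Set (ℕ × ℕ)) := by
  intro i l h
  refine (mem_weightedBox hlam).2 ⟨?_, modByMonic_mem_weightedDegreeLE hG hGw hf i l h⟩
  by_contra hl
  have hcoeff : (f %ₘ G).coeff l = 0 := coeff_eq_zero_of_degree_lt <|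
    (degree_modByMonic_lt f hG).trans_le <| degree_le_natDegree.trans <|
      Nat.cast_le.2 (not_lt.1 hl)
  exact h (by rw [hcoeff, coeff_zero])

theorem supportedOn_weightedBox_le [Semiring R] {lam d w : ℕ} :
    supportedOn R (weightedBox lam d w : Set (ℕ × ℕ)) ≤ weightedDegreeLE R lam w :=
  supportedOn_mono fun _ hx => (Finset.mem_filter.1 hx).2

theorem degree_lt_of_mem_supportedOn_weightedBox [Semiring R] {lam d w : ℕ} {f : R[X][Y]}
    (hf : f ∈ supportedOn R (weightedBox lam d w : Set (ℕ × ℕ))) : f.degree < d := by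
  refine (degree_lt_iff_coeff_zero f d).2 fun l hl => ext fun i => ?_
  rw [coeff_zero]
  by_contra h
  have := (Finset.mem_product.1 (Finset.mem_filter.1 (hf i l h)).1).2
  exact absurd hl (not_le.2 (Finset.mem_range.1 this))

theorem card_weightedBox {lam d w : ℕ} (hlam : 0 < lam) (h : d ≤ w + 1) :
    (weightedBox lam d w).card = ∑ l ∈ Finset.range d, ((w - l) / lam + 1) := by
  have hcol : ∀ l ∈ Finset.range d,
      ((weightedBox lam d w).filter fun x => x.2 = l).card = (w - l) / lam + 1 := by
    intro l hl
    rw [Finset.mem_range] at hl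
    have hset : (weightedBox lam d w).filter (fun x => x.2 = l) =
        Finset.range ((w - l) / lam + 1) ×ˢ {l} := by
      ext ⟨i, l'⟩
      simp only [Finset.mem_filter, mem_weightedBox hlam, Finset.mem_product, Finset.mem_range,
        Finset.mem_singleton, Nat.lt_succ_iff, Nat.le_div_iff_mul_le hlam, mul_comm i]
      constructor
      · rintro ⟨⟨-, h⟩, rfl⟩
        exact ⟨by omega, rfl⟩
      · rintro ⟨h, rfl⟩
        exact ⟨⟨hl, by omega⟩, rfl⟩
    rw [hset, Finset.card_product, Finset.card_range, Finset.card_singleton, mul_one]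
  rw [Finset.card_eq_sum_card_fiberwise (f := Prod.snd) (t := Finset.range d) fun x hx =>
    Finset.mem_coe.2 (Finset.mem_range.2 ((mem_weightedBox hlam).1 hx).1)]
  exact Finset.sum_congr rfl hcol

theorem card_weightedBox_add_sum_ceilDiv {lam d w : ℕ} (hlam : 0 < lam) (h : d ≤ lam * w + 1) :
    (weightedBox lam d (lam * w)).card + ∑ l ∈ Finset.range d, l ⌈/⌉ lam = d * (w + 1) := by
  rw [card_weightedBox hlam h, ← Finset.sum_add_distrib, Finset.sum_congr rfl (g := fun _ => w + 1),
    Finset.sum_const, Finset.card_range, smul_eq_mul]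
  intro l hl
  rw [Finset.mem_range] at hl
  have hle : l ⌈/⌉ lam ≤ w := (ceilDiv_le_iff_le_mul hlam).2 (by omega)
  have hdiv : (lam * w - l) / lam = w - l ⌈/⌉ lam := by
    refine eq_of_forall_le_iff fun i => ?_
    have hi : l ⌈/⌉ lam ≤ w - i ↔ l ≤ lam * (w - i) := ceilDiv_le_iff_le_mul hlam
    have hiw : lam * i ≤ lam * w ↔ i ≤ w := Nat.mul_le_mul_left_iff hlam
    rw [Nat.mul_sub] at hi
    rw [Nat.le_div_iff_mul_le hlam, mul_comm i]
    omega
  omega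

theorem card_weightedBox_sub_one_add_sum_div {lam d w : ℕ} (hlam : 0 < lam) (h : d ≤ lam * w)
    (hw : 0 < w) :
    (weightedBox lam d (lam * w - 1)).card + ∑ l ∈ Finset.range d, l / lam = d * w := by
  have hpos : 0 < lam * w := Nat.mul_pos hlam hw
  rw [card_weightedBox hlam (by omega), ← Finset.sum_add_distrib,
    Finset.sum_congr rfl (g := fun _ => w), Finset.sum_const, Finset.card_range, smul_eq_mul]
  intro l hl
  rw [Finset.mem_range] at hl
  have hlt : l / lam < w := Nat.div_lt_of_lt_mul (by omega)
  have hdiv : (lam * w - 1 - l) / lam = w - 1 - l / lam := by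
    refine eq_of_forall_le_iff fun i => ?_
    have hi : l / lam < w - i ↔ l < (w - i) * lam := Nat.div_lt_iff_lt_mul hlam
    have hiw : lam * i ≤ lam * w ↔ i ≤ w := Nat.mul_le_mul_left_iff hlam
    rw [Nat.sub_mul, mul_comm w, mul_comm i] at hi
    rw [Nat.le_div_iff_mul_le hlam, mul_comm i]
    omega
  omega

end WeightedDegree

section ZeroLemma

variable {L : Type*} [Field L]

/-- An irreducible plane curve `G(X, Y) = 0`, monic in `Y`, all of whose monomials have weighted
degree at most `deg_Y G` for the weight `lam` of `X` and the weight `1` of `Y`: above `X = ∞` the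
coordinate `Y` grows at most like `X ^ (1 / lam)`. -/
structure IsWeightedPrime (lam : ℕ) (G : L[X][Y]) : Prop where
  lam_pos : 0 < lam
  monic : G.Monic
  mem_weightedDegreeLE : G ∈ weightedDegreeLE L lam G.natDegree
  prime : Prime G

/-- The `L`-linear map `f ↦ H f mod G`. -/
noncomputable def mulModByMonic (G H : L[X][Y]) : L[X][Y] →ₗ[L] L[X][Y] :=
  (modByMonicHom G).restrictScalars L ∘ₗ LinearMap.mulLeft L H

theorem mulModByMonic_apply (G H f : L[X][Y]) : mulModByMonic G H f = (H * f) %ₘ G :=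
  rfl

theorem finrank_add_finrank_le_of_map_eq_top {V E : Type*} [AddCommGroup V] [Module L V]
    [AddCommGroup E] [Module L E] {D₁ D₂ : Submodule L V} [Module.Finite L D₁] [Module.Finite L D₂]
    {φ : V →ₗ[L] E} (hφ : D₂.map φ = ⊤) {ψ : V →ₗ[L] V} (hψ : ∀ x ∈ D₁, ψ x ∈ D₂)
    (hψ_inj : ∀ x ∈ D₁, ψ x = 0 → x = 0) (hφψ : ∀ x, φ (ψ x) = 0) :
    Module.finrank L E + Module.finrank L D₁ ≤ Module.finrank L D₂ := by
  have hrange : (φ.domRestrict D₂).range = ⊤ := by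
    rw [LinearMap.range_domRestrict, hφ]
  have hinj : Function.Injective (ψ.restrict hψ) :=
    (injective_iff_map_eq_zero _).2 fun x hx =>
      Subtype.ext (hψ_inj x x.2 (congrArg Subtype.val hx))
  have hker : (ψ.restrict hψ).range ≤ (φ.domRestrict D₂).ker := by
    rintro _ ⟨x, rfl⟩
    exact hφψ x
  have hrank := (φ.domRestrict D₂).finrank_range_add_finrank_ker
  rw [hrange, finrank_top] at hrank
  have hle := Submodule.finrank_mono hker
  rw [LinearMap.finrank_range_of_inj hinj] at hle
  omega

theorem exists_map_weightedDegreeLE_eq_top {E : Type*} [AddCommGroup E] [Module L E]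
    [Module.Finite L E] {φ : L[X][Y] →ₗ[L] E} (hφ : Function.Surjective φ) {lam : ℕ}
    (hlam : 0 < lam) : ∃ w₀, ∀ w ≥ w₀, (weightedDegreeLE L lam (lam * w)).map φ = ⊤ := by
  obtain ⟨s, hs⟩ := Module.Finite.fg_top (R := L) (M := E)
  choose f hf using hφ
  choose w hw using fun x => exists_mem_weightedDegreeLE hlam (f x)
  refine ⟨s.sup w, fun W hW => top_unique (hs ▸ Submodule.span_le.2 fun x hx => ?_)⟩
  have hle : w x ≤ W := (Finset.le_sup hx).trans hW
  exact ⟨f x, weightedDegreeLE_mono (Nat.mul_le_mul_left _ hle) (hw x), hf x⟩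

namespace IsWeightedPrime

variable {lam w : ℕ} {G H : L[X][Y]}

theorem map_supportedOn_weightedBox (hG : IsWeightedPrime lam G) {E : Type*} [AddCommGroup E]
    [Module L E] {φ : L[X][Y] →ₗ[L] E} (hφG : ∀ f, φ (G * f) = 0) (w : ℕ) :
    (supportedOn L (weightedBox lam G.natDegree w : Set (ℕ × ℕ))).map φ =
      (weightedDegreeLE L lam w).map φ := by
  refine le_antisymm (Submodule.map_mono supportedOn_weightedBox_le) ?_
  rintro _ ⟨f, hf, rfl⟩
  refine ⟨f %ₘ G, modByMonic_mem_supportedOn_weightedBox hG.lam_pos hG.monic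
    hG.mem_weightedDegreeLE hf, ?_⟩
  conv_rhs => rw [← modByMonic_add_div f G, map_add, hφG, add_zero]

theorem eq_zero_of_mul_modByMonic_eq_zero (hG : IsWeightedPrime lam G) (hGH : ¬G ∣ H)
    {f : L[X][Y]} (hf : f.degree < G.natDegree) (h : (H * f) %ₘ G = 0) : f = 0 := by
  rw [modByMonic_eq_zero_iff_dvd hG.monic] at h
  exact eq_zero_of_dvd_of_degree_lt ((hG.prime.dvd_or_dvd h).resolve_left hGH)
    (by rwa [degree_eq_natDegree hG.monic.ne_zero])

/-- The analogue of Bézout's bound: a quotient of the coordinate ring of `G = 0` in which `H`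
vanishes has dimension at most the intersection number of `G` and `H`. -/
theorem finrank_le (hG : IsWeightedPrime lam G) (hH : H ∈ weightedDegreeLE L lam (lam * w))
    (hGH : ¬G ∣ H) {E : Type*} [AddCommGroup E] [Module L E] [Module.Finite L E]
    {φ : L[X][Y] →ₗ[L] E} (hφ : Function.Surjective φ) (hφG : ∀ f, φ (G * f) = 0)
    (hφH : ∀ f, φ (H * f) = 0) : Module.finrank L E ≤ G.natDegree * w := by
  set d := G.natDegree
  obtain ⟨w₀, hw₀⟩ := exists_map_weightedDegreeLE_eq_top hφ hG.lam_pos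
  set W := w₀ + d
  have hdW : d ≤ lam * W := le_trans (by omega) (Nat.le_mul_of_pos_left W hG.lam_pos)
  have htop : (supportedOn L (weightedBox lam d (lam * (W + w)) : Set (ℕ × ℕ))).map φ = ⊤ := by
    rw [hG.map_supportedOn_weightedBox hφG, hw₀ _ (by omega)]
  have hmem : ∀ f ∈ supportedOn L (weightedBox lam d (lam * W) : Set (ℕ × ℕ)),
      mulModByMonic G H f ∈ supportedOn L (weightedBox lam d (lam * (W + w)) : Set (ℕ × ℕ)) := by
    intro f hf
    refine modByMonic_mem_supportedOn_weightedBox hG.lam_pos hG.monic hG.mem_weightedDegreeLE ?_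
    have := mul_mem_weightedDegreeLE hH (supportedOn_weightedBox_le hf)
    rwa [← mul_add, add_comm w] at this
  have hvanish : ∀ f, φ (mulModByMonic G H f) = 0 := fun f => by
    have := hφH f
    rwa [← modByMonic_add_div (H * f) G, map_add, hφG, add_zero] at this
  have hrank := finrank_add_finrank_le_of_map_eq_top htop hmem
    (fun f hf => hG.eq_zero_of_mul_modByMonic_eq_zero hGH
      (degree_lt_of_mem_supportedOn_weightedBox hf)) hvanish
  rw [finrank_supportedOn, finrank_supportedOn] at hrank
  have hcard₁ := card_weightedBox_add_sum_ceilDiv (w := W) hG.lam_pos (Nat.le_succ_of_le hdW)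
  have hcard₂ := card_weightedBox_add_sum_ceilDiv (d := d) (w := W + w) hG.lam_pos
    (Nat.le_succ_of_le (hdW.trans (Nat.mul_le_mul_left _ (Nat.le_add_right _ _))))
  linarith

end IsWeightedPrime

end ZeroLemma

section ZeroEstimates

variable {L : Type*} [Field L]

theorem surjective_pi_algHom {A ι : Type*} [CommRing A] [Algebra L A] [Finite ι]
    {φ : ι → A →ₐ[L] L} (hφ : Function.Injective φ) :
    Function.Surjective (LinearMap.pi fun i => (φ i).toLinearMap) := by
  have := Fintype.ofFinite ι
  classical
  rw [← LinearMap.range_eq_top]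
  by_contra hne
  obtain ⟨f, hf, hle⟩ := Submodule.exists_le_ker_of_lt_top _ (lt_top_iff_ne_top.2 hne)
  have hsum : ∑ i, f (fun j => if i = j then 1 else 0) • (φ i).toLinearMap = 0 := by
    ext a
    have := hle ⟨a, rfl⟩
    rw [LinearMap.mem_ker, LinearMap.pi_apply_eq_sum_univ] at this
    simpa [mul_comm] using this
  have hindep := (linearIndependent_algHom_toLinearMap L A L).comp φ hφ
  refine hf (LinearMap.ext fun u => ?_)
  rw [LinearMap.pi_apply_eq_sum_univ]
  exact Finset.sum_eq_zero fun i _ => by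
    rw [Fintype.linearIndependent_iff.1 hindep _ hsum i, smul_zero]

theorem exists_eq_mul_constantCoeff_ne_zero {R ι : Type*} [Semiring R] {J : Finset ι}
    {u : ι → R⟦X⟧} (hu : ∃ x ∈ J, u x ≠ 0) :
    ∃ (m : ℕ) (γ : ι → R⟦X⟧), (∀ x ∈ J, u x = PowerSeries.X ^ m * γ x) ∧
      ∃ x ∈ J, PowerSeries.constantCoeff (γ x) ≠ 0 := by
  obtain ⟨y, hy, hy0⟩ := hu
  obtain ⟨x₀, hx₀, hmin⟩ := J.exists_min_image (fun x => (u x).order) ⟨y, hy⟩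
  have hux₀ : u x₀ ≠ 0 := fun h => hy0 <| by
    rw [← PowerSeries.order_eq_top, ← top_le_iff, ← PowerSeries.order_eq_top.2 h]
    exact hmin y hy
  set m := (u x₀).order.toNat
  have hdvd : ∀ x, ∃ γ, x ∈ J → u x = PowerSeries.X ^ m * γ := fun x => by
    by_cases hx : x ∈ J
    · have : PowerSeries.X ^ m ∣ u x := PowerSeries.X_pow_dvd_iff.2 fun i hi =>
        PowerSeries.coeff_of_lt_order i <| lt_of_lt_of_le (by
          rw [← PowerSeries.coe_toNat_order hux₀]; exact_mod_cast hi) (hmin x hx)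
      exact this.imp fun γ hγ _ => hγ
    · exact ⟨0, fun h => absurd h hx⟩
  choose γ hγ using hdvd
  refine ⟨m, γ, hγ, x₀, hx₀, fun h0 => PowerSeries.coeff_order hux₀ ?_⟩
  have := PowerSeries.coeff_X_pow_mul (γ x₀) m 0
  rwa [zero_add, ← hγ x₀ hx₀, PowerSeries.coeff_zero_eq_constantCoeff_apply, h0] at this

theorem aeval_monomial_monomial {R : Type*} [CommSemiring R] (T : R⟦X⟧) (x : ℕ × ℕ) (a : R) :
    aeval T (monomial x.2 (monomial x.1 a)) =
      aeval T (monomial x.2 (monomial x.1 (1 : R))) * PowerSeries.C a := by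
  have : monomial x.2 (monomial x.1 a) = monomial x.2 (monomial x.1 (1 : R)) * C (C a) := by
    rw [monomial_mul_C, monomial_mul_C, one_mul]
  rw [this, map_mul, aeval_C, PowerSeries.algebraMap_apply']
  simp

namespace IsWeightedPrime

variable {lam w : ℕ} {G H : L[X][Y]}

theorem card_common_zeros_le (hG : IsWeightedPrime lam G)
    (hH : H ∈ weightedDegreeLE L lam (lam * w)) (hGH : ¬G ∣ H) (S : Finset (L × L))
    (hSG : ∀ x ∈ S, evalEval x.1 x.2 G = 0) (hSH : ∀ x ∈ S, evalEval x.1 x.2 H = 0) :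
    S.card ≤ G.natDegree * w := by
  set ev : S → L[X][Y] →ₐ[L] L := fun x => aevalAeval x.1.1 x.1.2
  have hev : Function.Injective ev := fun x y h => Subtype.ext <| Prod.ext
    (by simpa [ev] using DFunLike.congr_fun h (C X)) (by simpa [ev] using DFunLike.congr_fun h X)
  have hvanish : ∀ P : L[X][Y], (∀ x ∈ S, evalEval x.1 x.2 P = 0) → ∀ f,
      LinearMap.pi (fun x => (ev x).toLinearMap) (P * f) = 0 := fun P hP f => by
    ext x
    rw [LinearMap.pi_apply, AlgHom.toLinearMap_apply, map_mul]
    rw [show ev x P = 0 from (congrFun (coe_aevalAeval_eq_evalEval _ _) P).trans (hP x x.2)]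
    rw [zero_mul, Pi.zero_apply]
  have := hG.finrank_le hH hGH (surjective_pi_algHom hev) (hvanish G hSG) (hvanish H hSH)
  rwa [Module.finrank_pi, Fintype.card_coe] at this

variable {T : L⟦X⟧}

theorem order_le (hG : IsWeightedPrime lam G) (hT : aeval T G = 0)
    (hH : H ∈ weightedDegreeLE L lam (lam * w)) (hGH : ¬G ∣ H) {m : ℕ}
    (hm : PowerSeries.X ^ m ∣ aeval T H) : m ≤ G.natDegree * w := by
  set φ : L[X][Y] →ₗ[L] (Fin m → L) := LinearMap.pi fun i =>
    PowerSeries.coeff (i : ℕ) ∘ₗ ((aeval T).restrictScalars L).toLinearMap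
  have hφ_apply : ∀ f i, φ f i = PowerSeries.coeff (i : ℕ) (aeval T f) := fun _ _ => rfl
  have hφ : Function.Surjective φ := fun u => by
    refine ⟨C (∑ i : Fin m, monomial (i : ℕ) (u i)), funext fun i => ?_⟩
    rw [hφ_apply, aeval_C, PowerSeries.algebraMap_apply', Algebra.algebraMap_self,
      PowerSeries.map_id, id, Polynomial.coeff_coe, finsetSum_coeff]
    simp [coeff_monomial, Fin.val_inj]
  have := hG.finrank_le hH hGH hφ
    (fun f => funext fun i => by rw [hφ_apply, map_mul, hT, zero_mul, map_zero]; rfl)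
    (fun f => funext fun i => by
      rw [hφ_apply, map_mul]
      exact PowerSeries.X_pow_dvd_iff.1 (hm.mul_right _) i i.2)
  simpa using this

theorem dvd_of_aeval_eq_zero (hG : IsWeightedPrime lam G) (hT : aeval T G = 0)
    (hH : aeval T H = 0) : G ∣ H := by
  by_contra hGH
  obtain ⟨w, hw⟩ := exists_mem_weightedDegreeLE hG.lam_pos H
  have := hG.order_le hT hw hGH (m := G.natDegree * w + 1) (hH ▸ dvd_zero _)
  omega

theorem not_dvd_of_mem_supportedOn_weightedBox (hG : IsWeightedPrime lam G)
    (hH : H ∈ supportedOn L (weightedBox lam G.natDegree w : Set (ℕ × ℕ))) (hH0 : H ≠ 0) :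
    ¬G ∣ H := fun h => hH0 <| eq_zero_of_dvd_of_degree_lt h <| by
  rw [degree_eq_natDegree hG.monic.ne_zero]
  exact degree_lt_of_mem_supportedOn_weightedBox hH

theorem sum_aeval_monomial_mul_pow_ne_zero (hG : IsWeightedPrime lam G) (hT : aeval T G = 0)
    {p e : ℕ} [ExpChar L p] (hpe : G.natDegree * w < p ^ e) {J : Finset (ℕ × ℕ)}
    (hJ : J ⊆ weightedBox lam G.natDegree (lam * w)) {γ : ℕ × ℕ → L⟦X⟧}
    (hγ : ∃ x ∈ J, PowerSeries.constantCoeff (γ x) ≠ 0) :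
    ∑ x ∈ J, aeval T (monomial x.2 (monomial x.1 (1 : L))) * γ x ^ p ^ e ≠ 0 := by
  intro hzero
  have : ExpChar L⟦X⟧ p := expChar_of_injective_algebraMap PowerSeries.C_injective p
  set c := fun x => PowerSeries.constantCoeff (γ x)
  set H : L[X][Y] := ∑ x ∈ J, monomial x.2 (monomial x.1 (c x ^ p ^ e)) with hH_def
  have hH : H ∈ supportedOn L (weightedBox lam G.natDegree (lam * w) : Set (ℕ × ℕ)) :=
    Submodule.sum_mem _ fun x hx => monomial_mem_supportedOn (hJ hx) _
  have hH0 : H ≠ 0 := fun h => by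
    obtain ⟨x, hx, hγx⟩ := hγ
    have hcoeff := coeff_coeff_sum_monomial J (fun x => c x ^ p ^ e) x.1 x.2
    rw [← hH_def, h, coeff_zero, coeff_zero, if_pos hx] at hcoeff
    exact pow_ne_zero _ hγx hcoeff.symm
  -- `γ x ^ p ^ e` agrees with its constant coefficient up to order `p ^ e`
  have hfrob : ∀ x, PowerSeries.X ^ p ^ e ∣ PowerSeries.C (c x ^ p ^ e) - γ x ^ p ^ e := fun x => by
    rw [map_pow, ← sub_pow_expChar_pow]
    exact pow_dvd_pow_of_dvd (PowerSeries.X_dvd_iff.2 (by simp [c])) _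
  have hevH : aeval T H = ∑ x ∈ J, aeval T (monomial x.2 (monomial x.1 (1 : L))) *
      (PowerSeries.C (c x ^ p ^ e) - γ x ^ p ^ e) := by
    simp_rw [mul_sub]
    rw [Finset.sum_sub_distrib, hzero, sub_zero, map_sum]
    exact Finset.sum_congr rfl fun x _ => aeval_monomial_monomial T x _
  refine absurd (hG.order_le hT (supportedOn_weightedBox_le hH)
    (hG.not_dvd_of_mem_supportedOn_weightedBox hH hH0) ?_) (not_le.2 hpe)
  rw [hevH]
  exact Finset.dvd_sum fun x _ => (hfrob x).mul_left _

theorem not_dvd_sum_monomial_mul_pow (hG : IsWeightedPrime lam G) (hT : aeval T G = 0)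
    {p e : ℕ} [ExpChar L p] (hpe : G.natDegree * w < p ^ e) {J : Finset (ℕ × ℕ)}
    (hJ : J ⊆ weightedBox lam G.natDegree (lam * w)) {g : ℕ × ℕ → L[X][Y]}
    (hg : ∃ x ∈ J, ¬G ∣ g x) :
    ¬G ∣ ∑ x ∈ J, monomial x.2 (monomial x.1 1) * g x ^ p ^ e := by
  rintro ⟨r, hr⟩
  obtain ⟨m, γ, hγ, hγ0⟩ := exists_eq_mul_constantCoeff_ne_zero (J := J)
    (u := fun x => aeval T (g x)) <|
      hg.imp fun x hx => ⟨hx.1, fun h => hx.2 (hG.dvd_of_aeval_eq_zero hT h)⟩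
  refine hG.sum_aeval_monomial_mul_pow_ne_zero hT hpe hJ hγ0 ((mul_eq_zero.1 ?_).resolve_left
    (pow_ne_zero (p ^ e) (pow_ne_zero m PowerSeries.X_ne_zero)))
  have hzero := congrArg (aeval T) hr
  rw [map_mul, hT, zero_mul] at hzero
  rw [← hzero, map_sum, Finset.mul_sum]
  exact Finset.sum_congr rfl fun x hx => by
    rw [map_mul, map_pow, hγ x hx, mul_pow, mul_left_comm]

end IsWeightedPrime

end ZeroEstimates

section DividedDifference

variable {R : Type*} [CommRing R]

theorem coeff_divX_iterate (p : R[X]) (j l : ℕ) : (divX^[j] p).coeff l = p.coeff (l + j) := by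
  induction j generalizing l with
  | zero => rfl
  | succ j ih => rw [Function.iterate_succ_apply', coeff_divX, ih, add_right_comm, add_assoc]

theorem divX_iterate_natDegree (p : R[X]) : divX^[p.natDegree] p = C p.leadingCoeff := by
  ext l
  rw [coeff_divX_iterate, coeff_C]
  split_ifs with hl
  · rw [hl, zero_add, leadingCoeff]
  · exact coeff_eq_zero_of_natDegree_lt (by omega)

theorem sub_mul_sum_pow_mul_eval_divX_iterate (p : R[X]) (t y : R) :
    (t - y) * ∑ j ∈ Finset.range p.natDegree, t ^ j * (divX^[j + 1] p).eval y =
      p.eval t - p.eval y := by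
  have hstep : ∀ j, (t - y) * (t ^ j * (divX^[j + 1] p).eval y) =
      t ^ (j + 1) * (divX^[j + 1] p).eval y - t ^ j * (divX^[j] p).eval y + p.coeff j * t ^ j := by
    intro j
    have h := congrArg (eval y) (X_mul_divX_add (divX^[j] p))
    rw [← Function.iterate_succ_apply' divX, coeff_divX_iterate, zero_add, eval_add, eval_mul,
      eval_X, eval_C] at h
    rw [← h]
    ring
  rw [Finset.mul_sum, Finset.sum_congr rfl fun j _ => hstep j, Finset.sum_add_distrib,
    Finset.sum_range_sub fun j => t ^ j * (divX^[j] p).eval y, divX_iterate_natDegree,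
    eval_C, eval_eq_sum_range (p := p) t, Finset.sum_range_succ, Function.iterate_zero_apply,
    Finset.sum_congr rfl fun j _ => mul_comm (p.coeff j) (t ^ j), leadingCoeff]
  ring

theorem sub_mul_sum_pow_mul_evalEval_divX_iterate (G : R[X][Y]) (z t y : R) :
    (t - y) * ∑ j ∈ Finset.range G.natDegree, t ^ j * evalEval z y (divX^[j + 1] G) =
      evalEval z t G - evalEval z y G := by
  have h := congrArg (eval z) (sub_mul_sum_pow_mul_eval_divX_iterate G (C t) (C y))
  simpa only [eval_mul, eval_sub, eval_C, eval_finsetSum, eval_pow] using h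

theorem divX_iterate_mem_weightedDegreeLE {lam w : ℕ} {G : R[X][Y]}
    (hG : G ∈ weightedDegreeLE R lam w) (j : ℕ) :
    divX^[j] G ∈ weightedDegreeLE R lam (w - j) := by
  intro i l h
  rw [coeff_divX_iterate] at h
  have : lam * i + (l + j) ≤ w := hG i (l + j) h
  change lam * i + l ≤ w - j
  omega

end DividedDifference

section Digits

variable {L : Type*} [Field L]

/-- The `i`-th digit of `f` in base `X ^ s`, cut down to the monomials with exponents in `S`. -/
noncomputable def digit (S : Finset (ℕ × ℕ)) (s i : ℕ) (f : L[X][Y]) : L[X][Y] :=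
  ∑ y ∈ S, monomial y.2 (monomial y.1 ((f.coeff y.2).coeff (s * i + y.1)))

theorem digit_mem_supportedOn (S : Finset (ℕ × ℕ)) (s i : ℕ) (f : L[X][Y]) :
    digit S s i f ∈ supportedOn L (S : Set (ℕ × ℕ)) :=
  Submodule.sum_mem _ fun _ hy => monomial_mem_supportedOn (Finset.mem_coe.2 hy) _

theorem coeff_coeff_C_X_pow_mul_digit {S : Finset (ℕ × ℕ)} {s : ℕ} (hS : ∀ y ∈ S, y.1 < s)
    (i : ℕ) (f : L[X][Y]) (n l : ℕ) :
    ((C (X ^ (s * i)) * digit S s i f).coeff l).coeff n =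
      if i = n / s ∧ (n % s, l) ∈ S then (f.coeff l).coeff n else 0 := by
  rw [coeff_C_mul, coeff_X_pow_mul', digit, coeff_coeff_sum_monomial, ← ite_and]
  have hiff : (s * i ≤ n ∧ (n - s * i, l) ∈ S) ↔ (i = n / s ∧ (n % s, l) ∈ S) := by
    constructor
    · rintro ⟨hle, hmem⟩
      have hlt := hS _ hmem
      obtain ⟨m, rfl⟩ := Nat.exists_eq_add_of_le hle
      rw [Nat.add_sub_cancel_left] at hlt hmem
      have hs : 0 < s := by omega
      rw [Nat.mul_add_div hs, Nat.div_eq_of_lt hlt, Nat.mul_add_mod, Nat.mod_eq_of_lt hlt]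
      exact ⟨rfl, hmem⟩
    · rintro ⟨rfl, hmem⟩
      rw [← Nat.mod_eq_sub]
      exact ⟨Nat.mul_div_le n s, hmem⟩
  simp only [hiff]
  refine if_ctx_congr Iff.rfl (fun h => ?_) fun _ => rfl
  rw [Nat.add_sub_cancel' (hiff.2 h).1]

theorem eq_sum_C_X_pow_mul_digit {S : Finset (ℕ × ℕ)} {s N : ℕ} (hS : ∀ y ∈ S, y.1 < s)
    {f : L[X][Y]} (hf : f ∈ supportedOn L {x | x.1 / s < N ∧ (x.1 % s, x.2) ∈ S}) :
    f = ∑ i ∈ Finset.range N, C (X ^ (s * i)) * digit S s i f := by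
  ext l n
  rw [coeff_coeff_sum]
  simp_rw [coeff_coeff_C_X_pow_mul_digit hS, ite_and]
  rw [Finset.sum_ite_eq']
  simp only [Finset.mem_range, ← ite_and]
  exact (ite_eq_left_iff.2 fun h => (coeff_coeff_eq_zero (x := (n, l)) hf h).symm).symm

theorem digit_eq_zero {T : Set (ℕ × ℕ)} {S : Finset (ℕ × ℕ)} {s i : ℕ} {f : L[X][Y]}
    (hf : f ∈ supportedOn L T) (h : ∀ y ∈ S, (s * i + y.1, y.2) ∉ T) : digit S s i f = 0 :=
  Finset.sum_eq_zero fun y hy => by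
    rw [coeff_coeff_eq_zero (x := (s * i + y.1, y.2)) hf (h y hy), monomial_zero_right,
      monomial_zero_right]

variable {p : ℕ} [ExpChar L p] [PerfectRing L p]

/-- `f` with each coefficient replaced by its `p ^ e`-th root. -/
noncomputable def coeffRoot (p e : ℕ) [ExpChar L p] [PerfectRing L p] (f : L[X][Y]) : L[X][Y] :=
  f.map (mapRingHom (iterateFrobeniusEquiv L p e).symm.toRingHom)

theorem coeffRoot_eq_zero_iff {e : ℕ} {f : L[X][Y]} : coeffRoot p e f = 0 ↔ f = 0 :=
  Polynomial.map_eq_zero_iff (map_injective _ (iterateFrobeniusEquiv L p e).symm.injective)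

theorem coeffRoot_mem_supportedOn {e : ℕ} {f : L[X][Y]} {S : Set (ℕ × ℕ)}
    (hf : f ∈ supportedOn L S) : coeffRoot p e f ∈ supportedOn L S := fun i l h => hf i l fun h0 =>
  h (by rw [coeffRoot, coeff_map, coe_mapRingHom, coeff_map, h0, map_zero])

theorem evalEval_coeffRoot_pow (e : ℕ) (f : L[X][Y]) (z t : L) :
    evalEval z t (coeffRoot p e f) ^ p ^ e = evalEval (z ^ p ^ e) (t ^ p ^ e) f := by
  have h := map_mapRingHom_evalEval (iterateFrobeniusEquiv L p e).toRingHom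
    (p := coeffRoot p e f) z t
  rw [coeffRoot, Polynomial.map_map, mapRingHom_comp] at h
  have hid : (iterateFrobeniusEquiv L p e).toRingHom.comp
      (iterateFrobeniusEquiv L p e).symm.toRingHom = RingHom.id L := by
    ext; simp
  rw [hid, mapRingHom_id, Polynomial.map_id] at h
  exact h.symm

end Digits

section AuxiliaryPolynomial

variable {L : Type*} [Field L]

theorem exists_ne_zero_forall_eq_zero {ι : Type*} {s : Finset ι} {S : Finset (ℕ × ℕ)}
    (h : s.card < S.card) (ψ : ι → L[X][Y] →ₗ[L] L) :
    ∃ A ∈ supportedOn L (S : Set (ℕ × ℕ)), A ≠ 0 ∧ ∀ x ∈ s, ψ x A = 0 := by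
  have hrank : Module.finrank L (s → L) < Module.finrank L (supportedOn L (S : Set (ℕ × ℕ))) := by
    rwa [finrank_supportedOn, Module.finrank_pi, Fintype.card_coe]
  have hinj : ¬Function.Injective ((LinearMap.pi fun x : s => ψ x).domRestrict
      (supportedOn L (S : Set (ℕ × ℕ)))) := fun h =>
    hrank.not_ge (LinearMap.finrank_le_finrank_of_injective h)
  obtain ⟨A, B, hAB, hne⟩ := Function.not_injective_iff.1 hinj
  refine ⟨A - B, sub_mem A.2 B.2, sub_ne_zero.2 fun h => hne (Subtype.ext h), fun x hx => ?_⟩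
  rw [map_sub, sub_eq_zero]
  exact congrFun hAB ⟨x, hx⟩

variable {lam a b s w : ℕ} {G A : L[X][Y]}

namespace IsWeightedPrime

theorem exists_mulModByMonic_mem_supportedOn (hG : IsWeightedPrime lam G) (hb : b < lam * s)
    (u : ℕ → L[X][Y])
    (hcard : (weightedBox lam G.natDegree (a - 1)).card *
      (s * G.natDegree - (weightedBox lam G.natDegree b).card) <
        (weightedBox lam G.natDegree w).card) :
    ∃ A ∈ supportedOn L (weightedBox lam G.natDegree w : Set (ℕ × ℕ)), A ≠ 0 ∧
      ∀ j < G.natDegree, mulModByMonic G (u j) A ∈ supportedOn L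
        {x | x.2 < G.natDegree ∧ (lam * (x.1 / s) + j < a → lam * (x.1 % s) + x.2 ≤ b)} := by
  set d := G.natDegree
  have hs : 0 < s := Nat.pos_of_ne_zero fun h => by simp [h] at hb
  have hsub : weightedBox lam d b ⊆ Finset.range s ×ˢ Finset.range d := fun x hx => by
    obtain ⟨hxd, hxb⟩ := (mem_weightedBox hG.lam_pos).1 hx
    have : x.1 < s := lt_of_mul_lt_mul_left' (show lam * x.1 < lam * s by omega)
    simp [hxd, this]
  obtain ⟨A, hA, hA0, hvanish⟩ := exists_ne_zero_forall_eq_zero (L := L)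
    (s := weightedBox lam d (a - 1) ×ˢ ((Finset.range s ×ˢ Finset.range d) \ weightedBox lam d b))
    (S := weightedBox lam d w) (by
      rwa [Finset.card_product, Finset.card_sdiff_of_subset hsub, Finset.card_product,
        Finset.card_range, Finset.card_range])
    fun x => lcoeff L (s * x.1.1 + x.2.1) ∘ₗ (lcoeff L[X] x.2.2).restrictScalars L ∘ₗ
      mulModByMonic G (u x.1.2)
  refine ⟨A, hA, hA0, fun j hj n l hne => ?_⟩
  have hl : l < d := by
    by_contra h
    have hdeg := degree_modByMonic_lt (u j * A) hG.monic
    rw [degree_eq_natDegree hG.monic.ne_zero, degree_lt_iff_coeff_zero] at hdeg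
    rw [mulModByMonic_apply, hdeg l (by omega), coeff_zero] at hne
    exact hne rfl
  refine ⟨hl, fun ha => by_contra fun hlt => hne ?_⟩
  have := hvanish ((n / s, j), (n % s, l)) (by
    have hle : lam * (n / s) + j ≤ a - 1 := Nat.le_sub_one_of_lt ha
    simp only [Finset.mem_product, Finset.mem_sdiff, mem_weightedBox hG.lam_pos, Finset.mem_range]
    exact ⟨⟨hj, hle⟩, ⟨Nat.mod_lt n hs, hl⟩, fun h => hlt h.2⟩)
  simpa [Nat.div_add_mod] using this

theorem mulModByMonic_divX_pow_mem_supportedOn (hG : IsWeightedPrime lam G) (hb : b < lam * s)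
    (hA : A ∈ weightedDegreeLE L lam w) (hw : w + s * (G.natDegree - 1) = s * a + b) {j : ℕ}
    (hj : j < G.natDegree)
    (h : mulModByMonic G (divX^[j + 1] G ^ s) A ∈ supportedOn L
      {x | x.2 < G.natDegree ∧ (lam * (x.1 / s) + j < a → lam * (x.1 % s) + x.2 ≤ b)}) :
    mulModByMonic G (divX^[j + 1] G ^ s) A ∈ supportedOn L
      {x | lam * (x.1 / s) + j ≤ a + lam ∧ (x.1 % s, x.2) ∈ weightedBox lam G.natDegree b} := by
  intro n l hne
  obtain ⟨hl, hlow⟩ : l < G.natDegree ∧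
    (lam * (n / s) + j < a → lam * (n % s) + l ≤ b) := h n l hne
  have hweight : lam * n + l ≤ s * (G.natDegree - (j + 1)) + w :=
    modByMonic_mem_weightedDegreeLE hG.monic hG.mem_weightedDegreeLE
      (mul_mem_weightedDegreeLE (pow_mem_weightedDegreeLE
        (divX_iterate_mem_weightedDegreeLE hG.mem_weightedDegreeLE (j + 1)) s) hA) n l hne
  have hsum : s * (lam * (n / s) + j) + (lam * (n % s) + l) ≤ s * a + b := by
    have hn : lam * n = s * (lam * (n / s)) + lam * (n % s) := by
      conv_lhs => rw [← Nat.div_add_mod n s]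
      ring
    have hsj : s * (G.natDegree - (j + 1)) + s * j = s * (G.natDegree - 1) := by
      rw [← mul_add]
      congr 1
      omega
    rw [mul_add]
    omega
  change lam * (n / s) + j ≤ a + lam ∧ (n % s, l) ∈ weightedBox lam G.natDegree b
  rw [mem_weightedBox hG.lam_pos]
  refine ⟨?_, hl, ?_⟩
  · by_contra hgt
    have := Nat.mul_le_mul_left s (show a + lam ≤ lam * (n / s) + j by omega)
    rw [mul_add, mul_comm s lam] at this
    omega
  · by_cases ha : lam * (n / s) + j < a
    · exact hlow ha
    · have := Nat.mul_le_mul_left s (not_lt.1 ha)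
      change lam * (n % s) + l ≤ b
      omega

end IsWeightedPrime

theorem sum_pow_mul_evalEval_mulModByMonic_eq_zero {p : ℕ} [ExpChar L p]
    (G A : L[X][Y]) (e : ℕ) {z t y : L}
    (ht : evalEval z t G = 0) (hy : evalEval z y G = 0) (hty : t ≠ y) :
    ∑ j ∈ Finset.range G.natDegree,
      t ^ (j * p ^ e) * evalEval z y (mulModByMonic G (divX^[j + 1] G ^ p ^ e) A) = 0 := by
  have hmod : ∀ u, evalEval z y (mulModByMonic G u A) = evalEval z y u * evalEval z y A := by
    intro u
    have h := congrArg (evalEval z y) (modByMonic_add_div (u * A) G)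
    rwa [evalEval_add, evalEval_mul, evalEval_mul, hy, zero_mul, add_zero] at h
  have hdiv := sub_mul_sum_pow_mul_evalEval_divX_iterate G z t y
  rw [ht, hy, sub_zero] at hdiv
  have hzero := congrArg (· ^ p ^ e * evalEval z y A)
    ((mul_eq_zero.1 hdiv).resolve_left (sub_ne_zero.2 hty))
  simp only [zero_pow (expChar_pow_pos L p e).ne', zero_mul, sum_pow_char_pow] at hzero
  rw [← hzero, Finset.sum_mul]
  refine Finset.sum_congr rfl fun j _ => ?_
  rw [hmod, evalEval_pow]
  ring

variable {p e₁ e₂ : ℕ} [ExpChar L p] [PerfectRing L p]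

/-- The polynomial `H` with `H ^ p ^ e₁ = ∑ⱼ Y ^ (j * p ^ e₁) * fⱼ(X, Y ^ Q)` on the points whose
first coordinate is fixed by the `Q`-th power map, `Q = p ^ (e₁ + e₂)`, provided that the digits of
`fⱼ` in base `X ^ p ^ e₁` are supported on `S` and vanish where `lam * i + j > W`. -/
noncomputable def frobeniusCombination (p e₁ e₂ : ℕ) [ExpChar L p] [PerfectRing L p]
    (lam d W : ℕ) (S : Finset (ℕ × ℕ)) (f : ℕ → L[X][Y]) : L[X][Y] :=
  ∑ x ∈ weightedBox lam d W, monomial x.2 (monomial x.1 1) *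
    coeffRoot p (e₁ + e₂) (digit S (p ^ e₁) x.1 (f x.2)) ^ p ^ e₂

variable {d W : ℕ} {S : Finset (ℕ × ℕ)} {f : ℕ → L[X][Y]}

theorem evalEval_monomial_mul_coeffRoot_pow {z : L} (hz : z ^ p ^ (e₁ + e₂) = z) (t : L) (i j : ℕ)
    (g : L[X][Y]) :
    evalEval z t (monomial j (monomial i 1) * coeffRoot p (e₁ + e₂) g ^ p ^ e₂) ^ p ^ e₁ =
      t ^ (j * p ^ e₁) * evalEval z (t ^ p ^ (e₁ + e₂)) (C (X ^ (p ^ e₁ * i)) * g) := by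
  have hroot := evalEval_coeffRoot_pow (p := p) (e₁ + e₂) g z t
  rw [hz] at hroot
  rw [evalEval_mul, evalEval_pow, mul_pow, ← pow_mul, ← pow_add, add_comm e₂, hroot, evalEval_mul,
    evalEval_C, eval_pow, eval_X]
  simp only [evalEval, eval_monomial, eval_mul, eval_pow, eval_C, one_mul]
  rw [mul_pow, ← pow_mul, ← pow_mul, mul_comm i]
  ring

theorem le_of_digit_ne_zero {s i j : ℕ} {f : L[X][Y]} (hS : ∀ y ∈ S, y.1 < s)
    (hf : f ∈ supportedOn L {x | lam * (x.1 / s) + j ≤ W ∧ (x.1 % s, x.2) ∈ S})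
    (h : digit S s i f ≠ 0) : lam * i + j ≤ W := by
  by_contra hlt
  refine h (digit_eq_zero hf fun y hy hmem => hlt ?_)
  have hle : lam * ((s * i + y.1) / s) + j ≤ W := hmem.1
  rwa [Nat.mul_add_div ((Nat.zero_le _).trans_lt (hS y hy)), Nat.div_eq_of_lt (hS y hy),
    add_zero] at hle

theorem eq_sum_digit_of_mem_supportedOn {s j : ℕ} {f : L[X][Y]} (hlam : 0 < lam)
    (hS : ∀ y ∈ S, y.1 < s)
    (hf : f ∈ supportedOn L {x | lam * (x.1 / s) + j ≤ W ∧ (x.1 % s, x.2) ∈ S}) :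
    f = ∑ i ∈ Finset.range (W + 1), C (X ^ (s * i)) * digit S s i f := by
  refine eq_sum_C_X_pow_mul_digit hS fun n l hne => ?_
  obtain ⟨hle, hmem⟩ : lam * (n / s) + j ≤ W ∧ (n % s, l) ∈ S := hf n l hne
  have := Nat.le_mul_of_pos_left (n / s) hlam
  exact ⟨show n / s < W + 1 by omega, hmem⟩

theorem evalEval_frobeniusCombination_pow (hlam : 0 < lam) (hS : ∀ y ∈ S, y.1 < p ^ e₁)
    (hf : ∀ j < d, f j ∈ supportedOn L
      {x | lam * (x.1 / p ^ e₁) + j ≤ W ∧ (x.1 % p ^ e₁, x.2) ∈ S})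
    {z : L} (hz : z ^ p ^ (e₁ + e₂) = z) (t : L) :
    evalEval z t (frobeniusCombination p e₁ e₂ lam d W S f) ^ p ^ e₁ =
      ∑ j ∈ Finset.range d, t ^ (j * p ^ e₁) * evalEval z (t ^ p ^ (e₁ + e₂)) (f j) := by
  have hdigit : ∀ x ∈ Finset.range (W + 1) ×ˢ Finset.range d,
      digit S (p ^ e₁) x.1 (f x.2) ≠ 0 → lam * x.1 + x.2 ≤ W := fun x hx =>
    le_of_digit_ne_zero hS (hf x.2 (Finset.mem_range.1 (Finset.mem_product.1 hx).2))
  rw [frobeniusCombination, weightedBox, Finset.sum_filter_of_ne fun x hx hne => hdigit x hx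
    fun h => hne <| by
      rw [h, coeffRoot_eq_zero_iff.2 rfl, zero_pow (expChar_pow_pos L p e₂).ne', mul_zero],
    evalEval_finsetSum, sum_pow_char_pow, Finset.sum_product_right]
  refine Finset.sum_congr rfl fun j hj => ?_
  conv_rhs => rw [eq_sum_digit_of_mem_supportedOn hlam hS (hf j (Finset.mem_range.1 hj))]
  rw [evalEval_finsetSum, Finset.mul_sum]
  exact Finset.sum_congr rfl fun i _ => evalEval_monomial_mul_coeffRoot_pow hz t i j _

theorem frobeniusCombination_mem_weightedDegreeLE (hlam : 0 < lam) (b : ℕ) :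
    frobeniusCombination p e₁ e₂ lam d W (weightedBox lam d b) f ∈
      weightedDegreeLE L lam (W + p ^ e₂ * b) :=
  Submodule.sum_mem _ fun _ hx => mul_mem_weightedDegreeLE
    (monomial_mem_supportedOn (x := _) ((mem_weightedBox hlam).1 hx).2 1) <|
      pow_mem_weightedDegreeLE (coeffRoot_mem_supportedOn
        (supportedOn_weightedBox_le (digit_mem_supportedOn _ _ _ _))) _

namespace IsWeightedPrime

variable {T : L⟦X⟧}

theorem not_dvd_frobeniusCombination (hG : IsWeightedPrime lam G) (hT : aeval T G = 0)
    (hW : G.natDegree * w < p ^ e₂)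
    (hS : ∀ y ∈ weightedBox lam G.natDegree b, y.1 < p ^ e₁) {j : ℕ} (hj : j < G.natDegree)
    (hf : f j ∈ supportedOn L {x | lam * (x.1 / p ^ e₁) + j ≤ lam * w ∧
      (x.1 % p ^ e₁, x.2) ∈ weightedBox lam G.natDegree b}) (hf0 : f j ≠ 0) :
    ¬G ∣ frobeniusCombination p e₁ e₂ lam G.natDegree (lam * w)
      (weightedBox lam G.natDegree b) f := by
  obtain ⟨i, hi⟩ : ∃ i, digit (weightedBox lam G.natDegree b) (p ^ e₁) i (f j) ≠ 0 := by
    by_contra! h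
    exact hf0 <| (eq_sum_digit_of_mem_supportedOn hG.lam_pos hS hf).trans <|
      Finset.sum_eq_zero fun i _ => by rw [h, mul_zero]
  refine hG.not_dvd_sum_monomial_mul_pow hT hW Finset.Subset.rfl
    ⟨(i, j), (mem_weightedBox hG.lam_pos).2 ⟨hj, le_of_digit_ne_zero hS hf hi⟩, ?_⟩
  exact hG.not_dvd_of_mem_supportedOn_weightedBox
    (coeffRoot_mem_supportedOn (digit_mem_supportedOn _ _ _ _)) (coeffRoot_eq_zero_iff.not.2 hi)

/-- Stepanov's auxiliary polynomial. It vanishes where `t ^ Q ≠ t`, `Q = p ^ (e₁ + e₂)`, because the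
divided difference of `G z` at `t ^ Q` and `t`, two of its roots, does. -/
theorem exists_evalEval_eq_zero_of_pow_ne (hG : IsWeightedPrime lam G) (hT : aeval T G = 0)
    {α B wA : ℕ} (hB : B < p ^ e₁) (hα : G.natDegree * (α + 1) < p ^ e₂)
    (hwA : lam * wA + p ^ e₁ * (G.natDegree - 1) = p ^ e₁ * (lam * α) + lam * B)
    (hcard : (weightedBox lam G.natDegree (lam * α - 1)).card *
      (p ^ e₁ * G.natDegree - (weightedBox lam G.natDegree (lam * B)).card) <
        (weightedBox lam G.natDegree (lam * wA)).card)
    (hfrob : ∀ z t, z ^ p ^ (e₁ + e₂) = z → evalEval z t G = 0 →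
      evalEval z (t ^ p ^ (e₁ + e₂)) G = 0) :
    ∃ H ∈ weightedDegreeLE L lam (lam * (α + 1 + p ^ e₂ * B)), ¬G ∣ H ∧
      ∀ z t, z ^ p ^ (e₁ + e₂) = z → evalEval z t G = 0 → t ^ p ^ (e₁ + e₂) ≠ t →
        evalEval z t H = 0 := by
  have hb : lam * B < lam * p ^ e₁ := Nat.mul_lt_mul_of_pos_left hB hG.lam_pos
  obtain ⟨A, hA, hA0, hvanish⟩ :=
    hG.exists_mulModByMonic_mem_supportedOn hb (fun j => divX^[j + 1] G ^ p ^ e₁) hcard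
  have hd : 0 < G.natDegree := Nat.pos_of_ne_zero fun h => by simp [weightedBox, h] at hcard
  have hf := fun j hj => hG.mulModByMonic_divX_pow_mem_supportedOn hb
    (supportedOn_weightedBox_le hA) hwA hj (hvanish j hj)
  rw [← mul_add_one] at hf
  have hlast : mulModByMonic G (divX^[G.natDegree - 1 + 1] G ^ p ^ e₁) A = A := by
    rw [Nat.sub_add_cancel hd, divX_iterate_natDegree, hG.monic.leadingCoeff, C_1, one_pow,
      mulModByMonic_apply, one_mul, modByMonic_eq_self_iff hG.monic,
      degree_eq_natDegree hG.monic.ne_zero]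
    exact degree_lt_of_mem_supportedOn_weightedBox hA
  have hS : ∀ y ∈ weightedBox lam G.natDegree (lam * B), y.1 < p ^ e₁ := fun y hy =>
    lt_of_mul_lt_mul_left' (a := lam) (by have := ((mem_weightedBox hG.lam_pos).1 hy).2; omega)
  set f : ℕ → L[X][Y] := fun j => mulModByMonic G (divX^[j + 1] G ^ p ^ e₁) A
  refine ⟨frobeniusCombination p e₁ e₂ lam G.natDegree (lam * (α + 1))
    (weightedBox lam G.natDegree (lam * B)) f, ?_, ?_, fun z t hz ht hne => ?_⟩
  · have h := frobeniusCombination_mem_weightedDegreeLE (p := p) (e₁ := e₁) (e₂ := e₂)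
      (d := G.natDegree) (W := lam * (α + 1)) (f := f) hG.lam_pos (lam * B)
    rwa [mul_left_comm (p ^ e₂), ← mul_add] at h
  · have hd1 := Nat.sub_one_lt hd.ne'
    exact hG.not_dvd_frobeniusCombination hT hα hS hd1 (hf _ hd1) (hlast.trans_ne hA0)
  · have h := evalEval_frobeniusCombination_pow hG.lam_pos hS hf hz t
    rw [sum_pow_mul_evalEval_mulModByMonic_eq_zero G A e₁ ht (hfrob z t hz ht) hne.symm] at h
    exact eq_zero_of_pow_eq_zero h

end IsWeightedPrime

end AuxiliaryPolynomial

section FrobeniusQuotient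

variable {L : Type*} [Field L] {p e q j : ℕ}

/-- The polynomial `(X ^ q ^ j - X) / (X ^ q - X)`, for `q` a power of the characteristic. -/
noncomputable def frobeniusQuotient (L : Type*) [Field L] (q j : ℕ) : L[X] :=
  ∑ i ∈ Finset.range j, (X ^ q - X) ^ (q ^ i - 1)

lemma map_frobeniusQuotient {L' : Type*} [Field L'] (φ : L →+* L') (q j : ℕ) :
    (frobeniusQuotient L q j).map φ = frobeniusQuotient L' q j := by
  simp [frobeniusQuotient, Polynomial.map_sum]

lemma monic_X_pow_sub_X (hq : 1 < q) : (X ^ q - X : L[X]).Monic :=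
  monic_X_pow_sub (by rw [degree_X]; exact_mod_cast hq)

variable [Fact p.Prime]

lemma one_lt_of_eq_pow (hq : q = p ^ e) (he : e ≠ 0) : 1 < q :=
  hq ▸ Nat.one_lt_pow he (Fact.out : p.Prime).one_lt

variable [CharP L p]

lemma frobeniusQuotient_mul (hq : q = p ^ e) (j : ℕ) :
    frobeniusQuotient L q j * (X ^ q - X) = X ^ q ^ j - X := by
  subst hq
  have hterm : ∀ i ∈ Finset.range j, (X ^ p ^ e - X : L[X]) ^ ((p ^ e) ^ i - 1) * (X ^ p ^ e - X) =
      X ^ (p ^ e) ^ (i + 1) - X ^ (p ^ e) ^ i := fun i _ => by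
    have hpos : 0 < (p ^ e) ^ i := pow_pos (pow_pos (Fact.out : p.Prime).pos _) _
    rw [← pow_succ, Nat.sub_add_cancel hpos, ← pow_mul, sub_pow_char_pow, ← pow_mul, ← pow_add,
      ← pow_mul, mul_add_one, add_comm e]
  rw [frobeniusQuotient, Finset.sum_mul, Finset.sum_congr rfl hterm,
    Finset.sum_range_sub fun i => (X : L[X]) ^ (p ^ e) ^ i, pow_zero, pow_one]

lemma monic_frobeniusQuotient (hq : q = p ^ e) (he : e ≠ 0) (hj : j ≠ 0) :
    (frobeniusQuotient L q j).Monic := by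
  have hq1 := one_lt_of_eq_pow hq he
  refine (monic_X_pow_sub_X hq1).of_mul_monic_right ?_
  rw [frobeniusQuotient_mul hq]
  exact monic_X_pow_sub_X (Nat.one_lt_pow hj hq1)

lemma natDegree_frobeniusQuotient (hq : q = p ^ e) (he : e ≠ 0) (hj : j ≠ 0) :
    (frobeniusQuotient L q j).natDegree = q ^ j - q := by
  have hq1 := one_lt_of_eq_pow hq he
  have h := (monic_frobeniusQuotient (L := L) hq he hj).natDegree_mul (monic_X_pow_sub_X hq1)
  rw [frobeniusQuotient_mul hq, FiniteField.X_pow_card_sub_X_natDegree_eq L hq1,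
    FiniteField.X_pow_card_sub_X_natDegree_eq L (Nat.one_lt_pow hj hq1)] at h
  omega

lemma separable_frobeniusQuotient_mul (hq : q = p ^ e) (he : e ≠ 0) (hj : j ≠ 0) :
    (frobeniusQuotient L q j * (X ^ q - X)).Separable := by
  rw [frobeniusQuotient_mul hq]
  exact galois_poly_separable p _ (dvd_pow (hq ▸ dvd_pow_self p he) hj)

lemma pow_pow_eq_of_isRoot_frobeniusQuotient (hq : q = p ^ e) {t : L}
    (ht : (frobeniusQuotient L q j).IsRoot t) : t ^ q ^ j = t := by
  have h := congrArg (eval t) (frobeniusQuotient_mul (L := L) hq j)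
  rw [eval_mul, ht.eq_zero, zero_mul, eval_sub, eval_pow, eval_X] at h
  exact (sub_eq_zero.1 h.symm)

omit [Fact p.Prime] [CharP L p] in
lemma eval_ne_zero_of_separable_mul {A B : L[X]} (h : (A * B).Separable) {t : L}
    (ht : A.eval t = 0) : B.eval t ≠ 0 := fun hB =>
  not_isUnit_X_sub_C t (h.squarefree _ (mul_dvd_mul (dvd_iff_isRoot.2 ht) (dvd_iff_isRoot.2 hB)))

end FrobeniusQuotient

section Curve

variable {L : Type*} [Field L] {p e q v r : ℕ} {c : ℕ → L}

/-- The plane curve obtained from `∑ i ≤ r, c i * X ^ (q ^ r - q ^ i) * (Y ^ q ^ (v + i) - Y)` by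
removing the factor `Y ^ q - Y`. -/
noncomputable def curvePoly (q v r : ℕ) (c : ℕ → L) : L[X][Y] :=
  ∑ i ∈ Finset.range (r + 1),
    C (C (c i) * X ^ (q ^ r - q ^ i)) * (frobeniusQuotient L q (v + i)).map C

lemma map_curvePoly {L' : Type*} [Field L'] (φ : L →+* L') (q v r : ℕ) (c : ℕ → L) :
    (curvePoly q v r c).map (mapRingHom φ) = curvePoly q v r (φ ∘ c) := by
  have hC : (mapRingHom φ).comp C = (C : L' →+* L'[X]).comp φ := RingHom.ext fun x => by simp
  simp [curvePoly, Polynomial.map_sum, Polynomial.map_map, hC, ← map_frobeniusQuotient φ]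

lemma coeff_curvePoly (l : ℕ) :
    (curvePoly q v r c).coeff l = ∑ i ∈ Finset.range (r + 1),
      C (c i * (frobeniusQuotient L q (v + i)).coeff l) * X ^ (q ^ r - q ^ i) := by
  rw [curvePoly, finsetSum_coeff]
  refine Finset.sum_congr rfl fun i _ => ?_
  rw [coeff_C_mul, coeff_map, C_mul, mul_right_comm]

lemma map_evalRingHom_zero_curvePoly (hq : 1 < q) (hc : c r = 1) :
    (curvePoly q v r c).map (evalRingHom 0) = frobeniusQuotient L q (v + r) := by
  ext l
  rw [coeff_map, coeff_curvePoly, map_sum, Finset.sum_range_succ, Finset.sum_eq_zero]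
  · simp [hc]
  · intro i hi
    have hne : q ^ r - q ^ i ≠ 0 :=
      (Nat.sub_pos_of_lt (Nat.pow_lt_pow_right hq (Finset.mem_range.1 hi))).ne'
    simp [hne]

lemma natDegree_swap_curvePoly_le (hq : 0 < q) :
    (Bivariate.swap (curvePoly q v r c)).natDegree ≤ q ^ r - 1 := by
  rw [curvePoly, map_sum]
  refine natDegree_sum_le_of_forall_le _ _ fun i _ => ?_
  rw [map_mul, Bivariate.swap_C, Bivariate.swap_map_C]
  refine (natDegree_mul_C_le _ _).trans (natDegree_map_le.trans ?_)
  exact (natDegree_C_mul_X_pow_le _ _).trans (Nat.sub_le_sub_left (Nat.one_le_pow _ _ hq) _)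

variable [Fact p.Prime] [CharP L p]

lemma curvePoly_mul (hq : q = p ^ e) :
    curvePoly q v r c * (X ^ q - X) = ∑ i ∈ Finset.range (r + 1),
      C (C (c i) * X ^ (q ^ r - q ^ i)) * (X ^ q ^ (v + i) - X) := by
  have h (i : ℕ) : (frobeniusQuotient L q (v + i)).map C * (X ^ q - X) =
      (X ^ q ^ (v + i) - X : L[X][Y]) := by
    simpa using congrArg (Polynomial.map C) (frobeniusQuotient_mul (L := L) hq (v + i))
  simp_rw [curvePoly, Finset.sum_mul, mul_assoc, h]

lemma evalEval_curvePoly_mul (hq : q = p ^ e) (z t : L) :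
    evalEval z t (curvePoly q v r c) * (t ^ q - t) =
      ∑ i ∈ Finset.range (r + 1), c i * z ^ (q ^ r - q ^ i) * (t ^ q ^ (v + i) - t) := by
  simpa [evalEval_finsetSum, -map_mul, -map_pow, evalEval_C] using
    congrArg (evalEval z t) (curvePoly_mul (v := v) (r := r) (c := c) hq)

lemma eval_C_curvePoly_mul (hq : q = p ^ e) (t : L) :
    eval (C t) (curvePoly q v r c) * C (t ^ q - t) =
      ∑ i ∈ Finset.range (r + 1), C (c i * (t ^ q ^ (v + i) - t)) * X ^ (q ^ r - q ^ i) := by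
  have h := congrArg (eval (C t)) (curvePoly_mul (v := v) (r := r) (c := c) hq)
  simp only [eval_mul, eval_sub, eval_pow, eval_X, eval_finsetSum, eval_C] at h
  rw [C_sub, C_pow, h]
  refine Finset.sum_congr rfl fun i _ => ?_
  rw [C_mul, C_sub, C_pow]
  ring

lemma map_evalRingHom_curvePoly_mul (hq : q = p ^ e) (z : L) :
    (curvePoly q v r c).map (evalRingHom z) * (X ^ q - X) =
      ∑ i ∈ Finset.range (r + 1), C (c i * z ^ (q ^ r - q ^ i)) * (X ^ q ^ (v + i) - X) := by
  simpa [Polynomial.map_sum] using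
    congrArg (Polynomial.map (evalRingHom z)) (curvePoly_mul (v := v) (r := r) (c := c) hq)

lemma curvePoly_mem_weightedDegreeLE (hq : q = p ^ e) (he : e ≠ 0) (hv : v ≠ 0) :
    curvePoly q v r c ∈ weightedDegreeLE L (q ^ v) (q ^ (v + r) - q) := by
  intro n l hne
  rw [coeff_curvePoly, finsetSum_coeff] at hne
  obtain ⟨i, hi, h⟩ := Finset.exists_ne_zero_of_sum_ne_zero hne
  rw [coeff_C_mul_X_pow, ne_eq, ite_eq_right_iff, Classical.not_imp] at h
  have hl := le_natDegree_of_ne_zero (right_ne_zero_of_mul h.2)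
  rw [natDegree_frobeniusQuotient hq he (by omega)] at hl
  have hq0 : 0 < q := (one_lt_of_eq_pow hq he).le
  have hle : q ^ (v + i) ≤ q ^ (v + r) := Nat.pow_le_pow_right hq0 (by grind)
  have hqi : q ≤ q ^ (v + i) := Nat.le_self_pow (by omega) q
  change q ^ v * n + l ≤ _
  rw [h.1, Nat.mul_sub, ← pow_add, ← pow_add]
  omega

lemma monic_and_natDegree_curvePoly (hq : q = p ^ e) (he : e ≠ 0) (hv : v ≠ 0) (hc : c r = 1) :
    (curvePoly q v r c).Monic ∧ (curvePoly q v r c).natDegree = q ^ (v + r) - q := by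
  have hq1 := one_lt_of_eq_pow hq he
  have hmonic (i : ℕ) := monic_frobeniusQuotient (L := L) hq he (j := v + i) (by omega)
  have hdeg (i : ℕ) : ((frobeniusQuotient L q (v + i)).map (C : L →+* L[X])).degree =
      (q ^ (v + i) - q : ℕ) := by
    rw [degree_map_eq_of_injective (C_injective), degree_eq_natDegree (hmonic i).ne_zero,
      natDegree_frobeniusQuotient hq he (by omega)]
  have hlow : (∑ i ∈ Finset.range r, C (C (c i) * X ^ (q ^ r - q ^ i)) *
      (frobeniusQuotient L q (v + i)).map (C : L →+* L[X])).degree <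
        ((frobeniusQuotient L q (v + r)).map (C : L →+* L[X])).degree := by
    refine (degree_sum_le _ _).trans_lt ?_
    rw [hdeg, Finset.sup_lt_iff (WithBot.bot_lt_coe _)]
    intro i hi
    refine ((degree_mul_le _ _).trans (add_le_of_nonpos_left degree_C_le)).trans_lt ?_
    rw [hdeg]
    have hlt : q ^ (v + i) < q ^ (v + r) := Nat.pow_lt_pow_right hq1 (by grind)
    have hqi : q ≤ q ^ (v + i) := Nat.le_self_pow (by omega) q
    norm_cast
    omega
  rw [curvePoly, Finset.sum_range_succ, hc, Nat.sub_self, pow_zero, C_1, mul_one, C_1, one_mul]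
  exact ⟨((hmonic r).map C).add_of_right hlow, natDegree_eq_of_degree_eq_some
    ((degree_add_eq_right_of_degree_lt hlow).trans (hdeg r))⟩

end Curve

section CurvePrime

variable {L : Type*} [Field L] {p e q v r : ℕ} {c : ℕ → L}

lemma natDegree_eval_C_le_natDegree_swap (P : L[X][Y]) (t : L) :
    (eval (C t) P).natDegree ≤ (Bivariate.swap P).natDegree := by
  have h : eval (C t) P = (Bivariate.swap P).map (evalRingHom t) := by
    have hC : (evalRingHom t).comp C = RingHom.id L := RingHom.ext fun x => by simp
    induction P using Polynomial.induction_on' with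
    | add P Q hP hQ => simp [hP, hQ]
    | monomial n f => rw [Bivariate.swap_monomial]; simp [Polynomial.map_map, hC]
  rw [h]
  exact natDegree_map_le

lemma coeff_zero_eval_C (P : L[X][Y]) (t : L) :
    (eval (C t) P).coeff 0 = eval t (P.map (evalRingHom 0)) := by
  rw [coeff_zero_eq_eval_zero, map_evalRingHom_eval, evalEval]

variable [Fact p.Prime] [CharP L p]

lemma eval_C_curvePoly_ne_zero (hq : q = p ^ e) (he : e ≠ 0)
    (hgcd : ∀ t : L, (∀ i ≤ r, c i ≠ 0 → t ^ q ^ (v + i) = t) → t ^ q = t) {t : L}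
    (ht : t ^ q ≠ t) : eval (C t) (curvePoly q v r c) ≠ 0 := by
  intro h0
  refine ht (hgcd t fun i hi hci => ?_)
  have hq1 := one_lt_of_eq_pow hq he
  have h := congrArg (coeff · (q ^ r - q ^ i))
    (eval_C_curvePoly_mul (v := v) (r := r) (c := c) hq t)
  simp only [h0, zero_mul, coeff_zero, finsetSum_coeff, coeff_C_mul_X_pow] at h
  rw [Finset.sum_eq_single_of_mem i (by grind), if_pos rfl] at h
  · exact sub_eq_zero.1 ((mul_eq_zero.1 h.symm).resolve_left hci)
  · intro i' hi' hne
    rw [if_neg]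
    intro hpow
    have hle : q ^ i ≤ q ^ r := Nat.pow_le_pow_right hq1.le hi
    have hle' : q ^ i' ≤ q ^ r := Nat.pow_le_pow_right hq1.le (by grind)
    exact hne (Nat.pow_right_injective hq1 (show q ^ i' = q ^ i by omega))

lemma X_pow_dvd_eval_C_of_mul_eq_curvePoly (hq : q = p ^ e) (he : e ≠ 0) (hr : r ≠ 0)
    (hc : c r = 1) {A B : L[X][Y]} (hAB : A * B = curvePoly q v r c) {t : L}
    (ht : (A.map (evalRingHom 0)).IsRoot t) :
    t ^ q ≠ t ∧ X ^ (q ^ r - q ^ (r - 1)) ∣ eval (C t) A := by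
  have hq1 := one_lt_of_eq_pow hq he
  have hAB0 : A.map (evalRingHom 0) * B.map (evalRingHom 0) = frobeniusQuotient L q (v + r) := by
    rw [← Polynomial.map_mul, hAB, map_evalRingHom_zero_curvePoly hq1 hc]
  have hsep := separable_frobeniusQuotient_mul (L := L) hq he (j := v + r) (by omega)
  have htq : t ^ q ≠ t := fun h => eval_ne_zero_of_separable_mul (t := t) hsep
    (by rw [← hAB0, eval_mul, ht.eq_zero, zero_mul]) (by simp [h])
  have hBt : ¬ X ∣ eval (C t) B := by
    rw [X_dvd_iff, coeff_zero_eval_C]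
    exact eval_ne_zero_of_separable_mul (hAB0 ▸ hsep.of_mul_left) ht
  have hdvd : X ^ (q ^ r - q ^ (r - 1)) ∣ eval (C t) A * eval (C t) B * C (t ^ q - t) := by
    have htr : t ^ q ^ (v + r) = t := pow_pow_eq_of_isRoot_frobeniusQuotient hq
      (by rw [IsRoot, ← hAB0, eval_mul, ht.eq_zero, zero_mul])
    rw [← eval_mul, hAB, eval_C_curvePoly_mul hq, Finset.sum_range_succ, htr, sub_self, mul_zero,
      C_0, zero_mul, add_zero]
    refine Finset.dvd_sum fun i hi => Dvd.dvd.mul_left (pow_dvd_pow _ ?_) _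
    exact Nat.sub_le_sub_left (Nat.pow_le_pow_right hq1.le (by grind)) _
  have hunit : IsUnit (C (t ^ q - t)) := isUnit_C.2 (sub_ne_zero.2 htq).isUnit
  exact ⟨htq, prime_X.pow_dvd_of_dvd_mul_right _ hBt (hunit.dvd_mul_right.1 hdvd)⟩

lemma le_natDegree_swap_of_mul_eq_curvePoly [IsAlgClosed L] (hq : q = p ^ e) (he : e ≠ 0)
    (hr : r ≠ 0) (hc : c r = 1)
    (hgcd : ∀ t : L, (∀ i ≤ r, c i ≠ 0 → t ^ q ^ (v + i) = t) → t ^ q = t)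
    {A B : L[X][Y]} (hA : A.Monic) (hA0 : A.natDegree ≠ 0) (hAB : A * B = curvePoly q v r c) :
    q ^ r - q ^ (r - 1) ≤ (Bivariate.swap A).natDegree := by
  obtain ⟨t, ht⟩ := IsAlgClosed.exists_root (A.map (evalRingHom 0))
    (by rw [hA.degree_map]; exact fun h => hA0 (natDegree_eq_of_degree_eq_some h))
  obtain ⟨htq, hdvd⟩ := X_pow_dvd_eval_C_of_mul_eq_curvePoly hq he hr hc hAB ht
  have hne : eval (C t) A ≠ 0 := fun h => eval_C_curvePoly_ne_zero hq he hgcd htq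
    (by rw [← hAB, eval_mul, h, zero_mul])
  have hdeg := natDegree_le_of_dvd hdvd hne
  rw [natDegree_X_pow] at hdeg
  exact hdeg.trans (natDegree_eval_C_le_natDegree_swap A t)

theorem prime_curvePoly [IsAlgClosed L] (hq : q = p ^ e) (he : e ≠ 0) (hv : v ≠ 0) (hr : r ≠ 0)
    (hc : c r = 1) (hgcd : ∀ t : L, (∀ i ≤ r, c i ≠ 0 → t ^ q ^ (v + i) = t) → t ^ q = t) :
    Prime (curvePoly q v r c) := by
  have hq1 := one_lt_of_eq_pow hq he
  obtain ⟨hmonic, hdeg⟩ := monic_and_natDegree_curvePoly hq he hv hc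
  have hdpos : q ^ 1 < q ^ (v + r) := Nat.pow_lt_pow_right hq1 (by omega)
  rw [← UniqueFactorizationMonoid.irreducible_iff_prime, hmonic.irreducible_iff_natDegree]
  refine ⟨fun h => by rw [h, natDegree_one] at hdeg; rw [pow_one] at hdpos; omega,
    fun A B hA hB hAB => ?_⟩
  by_contra! hcon
  -- `A` and `B` both have `X`-degree at least `q ^ r - q ^ (r - 1) ≥ q ^ r / 2`, which is too much.
  have hdegA := le_natDegree_swap_of_mul_eq_curvePoly hq he hr hc hgcd hA hcon.1 hAB
  have hdegB := le_natDegree_swap_of_mul_eq_curvePoly hq he hr hc hgcd hB hcon.2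
    ((mul_comm B A).trans hAB)
  have hdegG := natDegree_swap_curvePoly_le (v := v) (r := r) (c := c) hq1.le
  rw [← hAB, map_mul, natDegree_mul ((EmbeddingLike.map_ne_zero_iff).2 hA.ne_zero)
    ((EmbeddingLike.map_ne_zero_iff).2 hB.ne_zero)] at hdegG
  have hpow : q ^ r = q ^ (r - 1) * q := by rw [← pow_succ, Nat.sub_add_cancel (by omega)]
  have htwo : q ^ (r - 1) * 2 ≤ q ^ (r - 1) * q := Nat.mul_le_mul_left _ hq1
  have hpos : 0 < q ^ (r - 1) := Nat.pow_pos hq1.le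
  omega

lemma isWeightedPrime_curvePoly [IsAlgClosed L] (hq : q = p ^ e) (he : e ≠ 0) (hv : v ≠ 0)
    (hr : r ≠ 0) (hc : c r = 1)
    (hgcd : ∀ t : L, (∀ i ≤ r, c i ≠ 0 → t ^ q ^ (v + i) = t) → t ^ q = t) :
    IsWeightedPrime (q ^ v) (curvePoly q v r c) where
  lam_pos := pow_pos (one_lt_of_eq_pow hq he).le _
  monic := (monic_and_natDegree_curvePoly hq he hv hc).1
  mem_weightedDegreeLE := by
    rw [(monic_and_natDegree_curvePoly hq he hv hc).2]
    exact curvePoly_mem_weightedDegreeLE hq he hv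
  prime := prime_curvePoly hq he hv hr hc hgcd

end CurvePrime

section PowerSeriesPoint

variable {L : Type*} [Field L]

lemma exists_aeval_powerSeries_eq_zero {G : L[X][Y]} (hG : G.Monic) {t : L}
    (ht : (G.map (evalRingHom 0)).IsRoot t)
    (ht' : eval t (derivative (G.map (evalRingHom 0))) ≠ 0) : ∃ T : L⟦X⟧, aeval T G = 0 := by
  have hcoeff (P : L[X][Y]) : PowerSeries.constantCoeff (aeval (PowerSeries.C t) P) =
      eval t (P.map (evalRingHom 0)) := by
    have hcomp : (PowerSeries.constantCoeff (R := L)).comp (algebraMap L[X] L⟦X⟧) =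
        evalRingHom 0 := Polynomial.ringHom_ext
        (fun x => by simp [PowerSeries.algebraMap_apply']) (by simp [PowerSeries.algebraMap_apply'])
    rw [aeval_def, hom_eval₂, hcomp, PowerSeries.constantCoeff_C, eval_map]
  have hmem (x : L⟦X⟧) : x ∈ Ideal.span {(PowerSeries.X : L⟦X⟧)} ↔
      PowerSeries.constantCoeff x = 0 := by
    rw [Ideal.mem_span_singleton, PowerSeries.X_dvd_iff]
  obtain ⟨T, hT, -⟩ := HenselianRing.is_henselian (I := Ideal.span {(PowerSeries.X : L⟦X⟧)})
    (G.map (algebraMap L[X] L⟦X⟧)) (hG.map _) (PowerSeries.C t)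
    (by rw [hmem, eval_map_algebraMap, hcoeff]; exact ht)
    (by
      refine IsUnit.map _ (PowerSeries.isUnit_iff_constantCoeff.2 (isUnit_iff_ne_zero.2 ?_))
      rwa [derivative_map, eval_map_algebraMap, hcoeff, ← derivative_map])
  exact ⟨T, by rwa [IsRoot, eval_map_algebraMap] at hT⟩

variable [IsAlgClosed L] {p e q v r : ℕ} {c : ℕ → L} [Fact p.Prime] [CharP L p]

theorem exists_aeval_curvePoly_eq_zero (hq : q = p ^ e) (he : e ≠ 0) (hv : v ≠ 0) (hr : r ≠ 0)
    (hc : c r = 1) : ∃ T : L⟦X⟧, aeval T (curvePoly q v r c) = 0 := by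
  have hq1 := one_lt_of_eq_pow hq he
  have hvr : v + r ≠ 0 := by omega
  have hlt : q ^ 1 < q ^ (v + r) := Nat.pow_lt_pow_right hq1 (by omega)
  obtain ⟨t, ht⟩ := IsAlgClosed.exists_root (frobeniusQuotient L q (v + r)) (by
    rw [degree_eq_natDegree (monic_frobeniusQuotient hq he hvr).ne_zero,
      natDegree_frobeniusQuotient hq he hvr]
    rw [pow_one] at hlt
    exact_mod_cast (Nat.sub_pos_of_lt hlt).ne')
  have hsep := (separable_frobeniusQuotient_mul (L := L) hq he hvr).of_mul_left
  refine exists_aeval_powerSeries_eq_zero (monic_and_natDegree_curvePoly hq he hv hc).1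
    (t := t) ?_ ?_
  · rwa [map_evalRingHom_zero_curvePoly hq1 hc]
  · rw [map_evalRingHom_zero_curvePoly hq1 hc]
    exact hsep.eval₂_derivative_ne_zero (RingHom.id L) ht

end PowerSeriesPoint

section Fibres

variable {L : Type*} [Field L] {p e q v r : ℕ} {c : ℕ → L} [Fact p.Prime] [CharP L p]

lemma separable_map_evalRingHom_curvePoly_mul (hq : q = p ^ e) (he : e ≠ 0) (hv : v ≠ 0) {z : L}
    (hz : ∑ i ∈ Finset.range (r + 1), c i * z ^ (q ^ r - q ^ i) ≠ 0) :
    ((curvePoly q v r c).map (evalRingHom z) * (X ^ q - X)).Separable := by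
  have hq0 : (q : L) = 0 := by rw [hq, Nat.cast_pow, CharP.cast_eq_zero, zero_pow he]
  have hderiv : derivative ((curvePoly q v r c).map (evalRingHom z) * (X ^ q - X)) =
      C (-∑ i ∈ Finset.range (r + 1), c i * z ^ (q ^ r - q ^ i)) := by
    rw [map_evalRingHom_curvePoly_mul hq, derivative_sum, ← Finset.sum_neg_distrib, map_sum]
    refine Finset.sum_congr rfl fun i _ => ?_
    rw [derivative_C_mul, derivative_sub, derivative_X_pow, Nat.cast_pow, hq0,
      zero_pow (by omega), C_0, zero_mul, derivative_X, zero_sub, mul_neg_one, C_neg]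
  rw [separable_def, hderiv]
  exact isCoprime_comm.1 ⟨(C (-∑ i ∈ Finset.range (r + 1), c i * z ^ (q ^ r - q ^ i))⁻¹), 0, by
    rw [zero_mul, add_zero, ← C_mul, inv_mul_cancel₀ (neg_ne_zero.2 hz), C_1]⟩

lemma pow_ne_of_evalEval_curvePoly_eq_zero (hq : q = p ^ e) (he : e ≠ 0) (hv : v ≠ 0) {z t : L}
    (hz : ∑ i ∈ Finset.range (r + 1), c i * z ^ (q ^ r - q ^ i) ≠ 0)
    (ht : evalEval z t (curvePoly q v r c) = 0) : t ^ q ≠ t := fun htq =>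
  eval_ne_zero_of_separable_mul (separable_map_evalRingHom_curvePoly_mul hq he hv hz)
    ((map_evalRingHom_eval z t _).trans ht) (by simp [htq])

lemma card_roots_map_evalRingHom_curvePoly [IsAlgClosed L] [DecidableEq L] (hq : q = p ^ e)
    (he : e ≠ 0) (hv : v ≠ 0) (hc : c r = 1) {z : L}
    (hz : ∑ i ∈ Finset.range (r + 1), c i * z ^ (q ^ r - q ^ i) ≠ 0) :
    ((curvePoly q v r c).map (evalRingHom z)).roots.toFinset.card = q ^ (v + r) - q := by
  obtain ⟨hmonic, hdeg⟩ := monic_and_natDegree_curvePoly hq he hv hc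
  have hsep := (separable_map_evalRingHom_curvePoly_mul hq he hv hz).of_mul_left
  rw [Multiset.toFinset_card_of_nodup (nodup_roots hsep),
    ← (IsAlgClosed.splits _).natDegree_eq_card_roots, hmonic.natDegree_map, hdeg]

end Fibres

lemma mem_range_algebraMap_of_pow_card_eq {K L : Type*} [Field K] [Fintype K] [Field L]
    [Algebra K L] {t : L} (ht : t ^ Fintype.card K = t) : t ∈ (algebraMap K L).range := by
  have hroots := roots_map_of_injective_of_card_eq_natDegree (algebraMap K L).injective
    (p := X ^ Fintype.card K - X) (by
      rw [FiniteField.roots_X_pow_card_sub_X,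
        FiniteField.X_pow_card_sub_X_natDegree_eq K Fintype.one_lt_card]
      rfl)
  have hmem : t ∈ ((X ^ Fintype.card K - X : K[X]).map (algebraMap K L)).roots := by
    rw [mem_roots
      (Polynomial.map_ne_zero (FiniteField.X_pow_card_sub_X_ne_zero K Fintype.one_lt_card))]
    simp [ht]
  rw [← hroots] at hmem
  obtain ⟨x, -, hx⟩ := Multiset.mem_map.1 hmem
  exact ⟨x, hx⟩

section Points

variable {K : Type*} [Field K] [Fintype K] {p e q v r e₁ e₂ w α B wA : ℕ} {c : ℕ → K}

open scoped Classical in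
/-- The nonzero `z ∈ K` above which the fibre of `curvePoly q v r c` is unramified. -/
noncomputable def unramifiedFibres (q r : ℕ) (c : ℕ → K) : Finset K :=
  {z | z ≠ 0 ∧ ∑ i ∈ Finset.range (r + 1), c i * z ^ (q ^ r - q ^ i) ≠ 0}

open scoped Classical in
/-- The `K`-rational points of `curvePoly q v r c` in the unramified fibres. They are described by
the equation before the division by `Y ^ q - Y`. -/
noncomputable def rationalPoints (q v r : ℕ) (c : ℕ → K) : Finset (K × K) :=
  {x | x.1 ∈ unramifiedFibres q r c ∧ x.2 ^ q ≠ x.2 ∧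
    ∑ i ∈ Finset.range (r + 1), c i * x.1 ^ (q ^ r - q ^ i) * (x.2 ^ q ^ (v + i) - x.2) = 0}

lemma mem_unramifiedFibres {z : K} : z ∈ unramifiedFibres q r c ↔
    z ≠ 0 ∧ ∑ i ∈ Finset.range (r + 1), c i * z ^ (q ^ r - q ^ i) ≠ 0 := by
  simp [unramifiedFibres]

lemma mem_rationalPoints {x : K × K} : x ∈ rationalPoints q v r c ↔
    x.1 ∈ unramifiedFibres q r c ∧ x.2 ^ q ≠ x.2 ∧
      ∑ i ∈ Finset.range (r + 1), c i * x.1 ^ (q ^ r - q ^ i) * (x.2 ^ q ^ (v + i) - x.2) = 0 := by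
  simp [rationalPoints]

variable {L : Type*} [Field L] [Algebra K L]

lemma sum_algebraMap_ne_zero_of_mem_unramifiedFibres {z : K} (hz : z ∈ unramifiedFibres q r c) :
    ∑ i ∈ Finset.range (r + 1),
      (algebraMap K L ∘ c) i * algebraMap K L z ^ (q ^ r - q ^ i) ≠ 0 := by
  simpa [map_sum] using (_root_.map_ne_zero (algebraMap K L)).2 (mem_unramifiedFibres.1 hz).2

variable [Fact p.Prime] [CharP L p]

lemma exists_mem_rationalPoints (hq : q = p ^ e) (he : e ≠ 0) (hv : v ≠ 0) {z : K} {t : L}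
    (hz : z ∈ unramifiedFibres q r c)
    (ht : evalEval (algebraMap K L z) t (curvePoly q v r (algebraMap K L ∘ c)) = 0)
    (htK : t ^ Fintype.card K = t) :
    ∃ y : K, algebraMap K L y = t ∧ (z, y) ∈ rationalPoints q v r c := by
  obtain ⟨y, rfl⟩ := mem_range_algebraMap_of_pow_card_eq htK
  have hyq := pow_ne_of_evalEval_curvePoly_eq_zero hq he hv
    (sum_algebraMap_ne_zero_of_mem_unramifiedFibres hz) ht
  refine ⟨y, rfl, mem_rationalPoints.2 ⟨hz, fun h => hyq (by rw [← map_pow, h]), ?_⟩⟩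
  have h := evalEval_curvePoly_mul (v := v) (r := r) (c := algebraMap K L ∘ c) hq
    (algebraMap K L z) (algebraMap K L y)
  rw [ht, zero_mul] at h
  apply (algebraMap K L).injective
  simpa [map_sum] using h.symm

lemma evalEval_pow_card_curvePoly_eq_zero (hcard : Fintype.card K = p ^ w) {z : K} {t : L}
    (ht : evalEval (algebraMap K L z) t (curvePoly q v r (algebraMap K L ∘ c)) = 0) :
    evalEval (algebraMap K L z) (t ^ p ^ w) (curvePoly q v r (algebraMap K L ∘ c)) = 0 := by
  have hfix (x : K) : iterateFrobenius L p w (algebraMap K L x) = algebraMap K L x := by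
    rw [iterateFrobenius_def, ← hcard, ← map_pow, FiniteField.pow_card]
  have h := map_mapRingHom_evalEval (iterateFrobenius L p w)
    (curvePoly q v r (algebraMap K L ∘ c)) (algebraMap K L z) t
  have hc : iterateFrobenius L p w ∘ algebraMap K L ∘ c = algebraMap K L ∘ c :=
    funext fun i => hfix (c i)
  rwa [ht, map_zero, map_curvePoly, hc, hfix, iterateFrobenius_def] at h

omit [Fintype K] in
lemma forall_pow_eq_of_forall_dvd (hgcd : ∀ g, (∀ i ≤ r, c i ≠ 0 → g ∣ v + i) → g = 1) (t : L)
    (ht : ∀ i ≤ r, (algebraMap K L ∘ c) i ≠ 0 → t ^ q ^ (v + i) = t) : t ^ q = t := by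
  have hperiod := hgcd (Function.minimalPeriod (· ^ q) t) fun i hi hci =>
    Function.IsPeriodicPt.minimalPeriod_dvd (by
      rw [Function.IsPeriodicPt, Function.IsFixedPt, pow_iterate]
      exact ht i hi ((_root_.map_ne_zero _).2 hci))
  have h := Function.iterate_minimalPeriod (f := (· ^ q)) (x := t)
  rwa [hperiod] at h

variable (L) in
open scoped Classical in
/-- The `L`-rational points of `curvePoly q v r c` in the unramified fibres over `K`. -/
noncomputable def geometricPoints (q v r : ℕ) (c : ℕ → K) : Finset (Σ _ : K, L) :=
  (unramifiedFibres q r c).sigma fun z =>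
    ((curvePoly q v r (algebraMap K L ∘ c)).map (evalRingHom (algebraMap K L z))).roots.toFinset

lemma mem_geometricPoints (hq : q = p ^ e) (he : e ≠ 0) (hv : v ≠ 0) (hc : c r = 1)
    {x : Σ _ : K, L} : x ∈ geometricPoints L q v r c ↔ x.1 ∈ unramifiedFibres q r c ∧
      evalEval (algebraMap K L x.1) x.2 (curvePoly q v r (algebraMap K L ∘ c)) = 0 := by
  have hmonic := (monic_and_natDegree_curvePoly hq he hv
    (show (algebraMap K L ∘ c) r = 1 by simp [hc])).1
  classical
  rw [geometricPoints, Finset.mem_sigma, Multiset.mem_toFinset, mem_roots (hmonic.map _).ne_zero,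
    IsRoot, map_evalRingHom_eval]

lemma card_geometricPoints [IsAlgClosed L] (hq : q = p ^ e) (he : e ≠ 0) (hv : v ≠ 0)
    (hc : c r = 1) :
    (geometricPoints L q v r c).card = (unramifiedFibres q r c).card * (q ^ (v + r) - q) := by
  classical
  rw [geometricPoints, Finset.card_sigma, Finset.sum_const_nat]
  intro z hz
  convert card_roots_map_evalRingHom_curvePoly hq he hv (c := algebraMap K L ∘ c) (by simp [hc])
    (sum_algebraMap_ne_zero_of_mem_unramifiedFibres hz)

open scoped Classical in
lemma card_filter_pow_card_eq_geometricPoints_le (hq : q = p ^ e) (he : e ≠ 0) (hv : v ≠ 0)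
    (hc : c r = 1) :
    {x ∈ geometricPoints L q v r c | x.2 ^ Fintype.card K = x.2}.card ≤
      (rationalPoints q v r c).card := by
  have hsub : {x ∈ geometricPoints L q v r c | x.2 ^ Fintype.card K = x.2} ⊆
      (rationalPoints q v r c).image fun x => ⟨x.1, algebraMap K L x.2⟩ := by
    rintro ⟨z, t⟩ hx
    rw [Finset.mem_filter, mem_geometricPoints hq he hv hc] at hx
    obtain ⟨y, rfl, hy⟩ := exists_mem_rationalPoints hq he hv hx.1.1 hx.1.2 hx.2
    exact Finset.mem_image_of_mem _ hy
  exact (Finset.card_le_card hsub).trans Finset.card_image_le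

omit [CharP L p] in
theorem card_unramifiedFibres_mul_le [CharP K p] (hq : q = p ^ e) (he : e ≠ 0) (hv : v ≠ 0)
    (hr : r ≠ 0) (hc : c r = 1) (hgcd : ∀ g, (∀ i ≤ r, c i ≠ 0 → g ∣ v + i) → g = 1)
    (hcardK : Fintype.card K = p ^ (e₁ + e₂)) {d : ℕ} (hd : d = q ^ (v + r) - q)
    (hB : B < p ^ e₁) (hα : d * (α + 1) < p ^ e₂)
    (hwA : q ^ v * wA + p ^ e₁ * (d - 1) = p ^ e₁ * (q ^ v * α) + q ^ v * B)
    (hcount : (weightedBox (q ^ v) d (q ^ v * α - 1)).card *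
      (p ^ e₁ * d - (weightedBox (q ^ v) d (q ^ v * B)).card) <
        (weightedBox (q ^ v) d (q ^ v * wA)).card) :
    (unramifiedFibres q r c).card * d ≤
      (rationalPoints q v r c).card + d * (α + 1 + p ^ e₂ * B) := by
  classical
  let L := AlgebraicClosure K
  have : CharP L p := charP_of_injective_algebraMap (algebraMap K L).injective p
  have hc' : (algebraMap K L ∘ c) r = 1 := by simp [hc]
  have hG := isWeightedPrime_curvePoly hq he hv hr hc' (forall_pow_eq_of_forall_dvd hgcd)
  obtain ⟨T, hT⟩ := exists_aeval_curvePoly_eq_zero hq he hv hr hc'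
  obtain rfl : d = _ := hd.trans (monic_and_natDegree_curvePoly hq he hv hc').2.symm
  have hfix (z : K) : algebraMap K L z ^ p ^ (e₁ + e₂) = algebraMap K L z := by
    rw [← hcardK, ← map_pow, FiniteField.pow_card]
  obtain ⟨H, hH, hGH, hvanish⟩ := hG.exists_evalEval_eq_zero_of_pow_ne hT hB hα hwA hcount
    fun z t hz ht => by
      obtain ⟨y, rfl⟩ := mem_range_algebraMap_of_pow_card_eq (hcardK ▸ hz)
      exact evalEval_pow_card_curvePoly_eq_zero hcardK ht
  set S : Finset (Σ _ : K, L) :=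
    {x ∈ geometricPoints L q v r c | ¬ x.2 ^ Fintype.card K = x.2}
  have hmem {x : Σ _ : K, L} (hx : x ∈ S) :
      evalEval (algebraMap K L x.1) x.2 (curvePoly q v r (algebraMap K L ∘ c)) = 0 :=
    ((mem_geometricPoints hq he hv hc).1 (Finset.mem_filter.1 hx).1).2
  have hSle : S.card ≤ (curvePoly q v r (algebraMap K L ∘ c)).natDegree * (α + 1 + p ^ e₂ * B) := by
    rw [← Finset.card_map ⟨fun x : Σ _ : K, L => (algebraMap K L x.1, x.2), fun x y h => by
      rw [Prod.mk.injEq] at h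
      exact Sigma.ext ((algebraMap K L).injective h.1) (heq_of_eq h.2)⟩]
    refine hG.card_common_zeros_le hH hGH _ ?_ ?_
    · intro y hy
      obtain ⟨x, hx, rfl⟩ := Finset.mem_map.1 hy
      exact hmem hx
    · intro y hy
      obtain ⟨x, hx, rfl⟩ := Finset.mem_map.1 hy
      exact hvanish _ _ (hfix x.1) (hmem hx) (hcardK ▸ (Finset.mem_filter.1 hx).2)
  rw [congrArg (_ * ·) hd, ← card_geometricPoints (L := L) hq he hv hc,
    ← Finset.card_filter_add_card_filter_not fun x => x.2 ^ Fintype.card K = x.2]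
  exact add_le_add (card_filter_pow_card_eq_geometricPoints_le hq he hv hc) hSle

end Points

section BoxSums

variable {l ρ q d : ℕ}

theorem sum_range_mul_div (hl : 0 < l) (m : ℕ) :
    ∑ j ∈ Finset.range (l * m), j / l = l * m.choose 2 := by
  induction m with
  | zero => simp
  | succ m ih =>
    have hblock : ∀ i ∈ Finset.range l, (l * m + i) / l = m := fun i hi => by
      rw [Nat.mul_add_div hl, Nat.div_eq_of_lt (Finset.mem_range.1 hi), add_zero]
    rw [mul_add, mul_one, Finset.sum_range_add, ih, Finset.sum_congr rfl hblock, Finset.sum_const,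
      Finset.card_range, smul_eq_mul, Nat.choose_succ_succ', Nat.choose_one_right]
    ring

theorem two_mul_sum_range_div_add (hl : 0 < l) (hql : q ≤ l) (hρ : ρ ≠ 0) (hd : d + q = l * ρ) :
    2 * ∑ j ∈ Finset.range d, j / l + 2 * q * (ρ - 1) = l * ρ * (ρ - 1) := by
  have htail : ∀ i ∈ Finset.range q, (d + i) / l = ρ - 1 := fun i hi => by
    obtain ⟨ρ, rfl⟩ := Nat.exists_eq_succ_of_ne_zero hρ
    have hi := Finset.mem_range.1 hi
    rw [Nat.succ_eq_add_one, mul_add, mul_one] at hd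
    rw [Nat.succ_sub_one, Nat.div_eq_iff hl]
    constructor <;> lia
  have hsum := sum_range_mul_div hl ρ
  rw [← hd, Finset.sum_range_add, Finset.sum_congr rfl htail, Finset.sum_const, Finset.card_range,
    smul_eq_mul, Nat.choose_two_right] at hsum
  rw [mul_assoc, ← mul_add, hsum, mul_left_comm, Nat.mul_div_cancel' ρ.even_mul_pred_self.two_dvd,
    mul_assoc]

theorem sum_range_ceilDiv_add_le (hl : 0 < l) (hql : q ≤ l) (hd : d + q = l * ρ) (hd0 : d ≠ 0) :
    ∑ j ∈ Finset.range d, j ⌈/⌉ l + ρ ≤ ∑ j ∈ Finset.range d, j / l + d + 1 := by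
  obtain ⟨d, rfl⟩ := Nat.exists_eq_succ_of_ne_zero hd0
  have hsucc (j : ℕ) : (j + 1) ⌈/⌉ l = j / l + 1 := by
    rw [Nat.ceilDiv_eq_add_pred_div, add_right_comm, Nat.add_sub_cancel, Nat.add_div_right _ hl]
  have hlast : ρ ≤ d / l + 2 := by
    rw [← Nat.add_mul_div_right d 2 hl, Nat.le_div_iff_mul_le hl, mul_comm ρ]
    lia
  rw [Finset.sum_range_succ', Finset.sum_range_succ (fun j => j / l), zero_ceilDiv, add_zero,
    Finset.sum_congr rfl fun j _ => hsucc j, Finset.sum_add_distrib]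
  simp only [Finset.sum_const, Finset.card_range, smul_eq_mul, mul_one]
  lia

end BoxSums

section BoxCounts

variable {l ρ q d g : ℕ}

lemma mul_pred_le_of_sum_add_one_eq (hql : q ≤ l) (hl : 0 < l) (hρ : ρ ≠ 0) (hd : d + q = l * ρ)
    (hg : ∑ j ∈ Finset.range d, j / l + 1 = g + ρ) :
    d * (d - 1) ≤ l * (∑ j ∈ Finset.range d, j / l + d + g) := by
  have hF := two_mul_sum_range_div_add hl hql hρ hd
  obtain ⟨ρ, rfl⟩ := Nat.exists_eq_succ_of_ne_zero hρ
  obtain rfl | hd0 := Nat.eq_zero_or_pos d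
  · simp
  rw [← hd] at hF
  generalize ∑ j ∈ Finset.range d, j / l = F at *
  zify [hd0] at *
  simp only [Nat.succ_eq_add_one, Nat.add_sub_cancel] at *
  have hsum : (F + d + g : ℤ) = (ρ + 1) * (d - q - 1) + (q + 1) := by linarith
  have hle : (q : ℤ) * (q + 1) ≤ l * (q + 1) := mul_le_mul_of_nonneg_right hql (by positivity)
  have hprod : (l : ℤ) * (F + d + g) = (d + q) * (d - q - 1) + l * (q + 1) := by
    rw [hsum, hd]; ring
  linarith

/-- The dimension count behind the Stepanov auxiliary function, after substituting the box sizes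
`a ≥ d * w - g` and `b ≥ d * B - g`. -/
lemma pred_mul_tsub_lt_of_lt {T F s σ α B w a b : ℕ} (hs : s = l * σ) (hd : d ≠ 0)
    (hT : T + F = d * α + 1) (hT0 : T ≠ 0) (hsum : d * (d - 1) ≤ l * (F + d + g))
    (hw : w + σ * (d - 1) = s * α + B) (ha : d * w ≤ a + g) (hb : d * B ≤ b + g) (hbs : b ≤ s * d)
    (hB : T * (g + s * (d - 1)) + s * (g + 1) < T * (d * B)) :
    (T - 1) * (s * d - b) < a := by
  have hsσ : σ * (d * (d - 1)) ≤ s * (F + d + g) := by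
    rw [hs, mul_comm l, mul_assoc]; exact Nat.mul_le_mul_left σ hsum
  zify [hbs, Nat.pos_of_ne_zero hT0, Nat.pos_of_ne_zero hd] at *
  have hdw : (d : ℤ) * w = s * (T + F - 1) + d * B - σ * (d * (d - 1)) := by
    rw [hT]; linear_combination (d : ℤ) * hw
  have hT1 : (0 : ℤ) ≤ T - 1 := by lia
  calc ((T : ℤ) - 1) * (s * d - b) ≤ (T - 1) * (s * d - d * B + g) :=
        mul_le_mul_of_nonneg_left (by linarith) hT1
    _ < s * (T - 1 - d - g) + d * B - g := by linarith
    _ ≤ a := by linarith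

lemma exists_auxiliary_degree {s T : ℕ} (hl : 0 < l) (hd : d ≠ 0) (hT : T ≠ 0) (hds : d ≤ l * s)
    (hsT : T * (g + 1 + d) + s * (g + 1) ≤ s * T) :
    ∃ B, B < s ∧ d ≤ l * B ∧ T * (g + s * (d - 1)) + s * (g + 1) < T * (d * B) ∧
      T * (d * B) ≤ T * (g + d + s * (d - 1)) + s * (g + 1) := by
  set x := T * (g + s * (d - 1)) + s * (g + 1) with hx
  set B := x / (T * d) + 1 with hB
  have hBlt : x < T * (d * B) := by
    rw [← mul_assoc]; exact Nat.lt_mul_div_succ x (by positivity)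
  have hBle : T * (d * B) ≤ x + T * d := by
    rw [← mul_assoc, hB, mul_add, mul_one]; exact Nat.add_le_add_right (Nat.mul_div_le x _) _
  have hsdB : s * (d - 1) < d * B := by
    have : T * (s * (d - 1)) < T * (d * B) := by lia
    exact Nat.lt_of_mul_lt_mul_left this
  refine ⟨B, ?_, ?_, hBlt, by lia⟩
  · have : T * (d * B) < T * (d * s) := by
      obtain ⟨d, rfl⟩ := Nat.exists_eq_succ_of_ne_zero hd
      rw [Nat.succ_sub_one] at *
      lia
    exact Nat.lt_of_mul_lt_mul_left (Nat.lt_of_mul_lt_mul_left this)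
  · have : d * (d - 1) < d * (l * B) :=
      calc d * (d - 1) ≤ l * s * (d - 1) := Nat.mul_le_mul_right _ hds
        _ < d * (l * B) := by
          rw [mul_assoc, mul_left_comm d]; exact Nat.mul_lt_mul_of_pos_left hsdB hl
    have := Nat.lt_of_mul_lt_mul_left this
    lia

lemma exists_stepanov_weights {s T α : ℕ} (hd0 : d ≠ 0) (hdD : d + q = l * ρ)
    (hl : 0 < l) (hql : q ≤ l) (hρ : ρ ≠ 0) (hs : l ∣ s) (hds : d ≤ l * s) (hα : d ≤ l * α)
    (hg : ∑ j ∈ Finset.range d, j / l + 1 = g + ρ)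
    (hT : T + ∑ j ∈ Finset.range d, j / l = d * α + 1) (hT0 : T ≠ 0)
    (hsT : T * (g + 1 + d) + s * (g + 1) ≤ s * T) :
    ∃ B wA, B < s ∧
      l * wA + s * (d - 1) = s * (l * α) + l * B ∧
      (weightedBox (l) d (l * α - 1)).card *
        (s * d - (weightedBox (l) d (l * B)).card) <
          (weightedBox (l) d (l * wA)).card ∧
      T * (d * B) ≤ T * (g + d + s * (d - 1)) + s * (g + 1) := by
  obtain ⟨σ, hσ⟩ := hs
  obtain ⟨B, hBs, hdB, hBlt, hBle⟩ := exists_auxiliary_degree hl hd0 hT0 hds hsT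
  have hC := sum_range_ceilDiv_add_le hl hql hdD hd0
  have hsum := mul_pred_le_of_sum_add_one_eq hql hl hρ hdD hg
  have hσα : σ * (d - 1) ≤ s * α := by
    rw [hσ, mul_comm l, mul_assoc]; exact Nat.mul_le_mul_left σ (by lia)
  set w := s * α + B - σ * (d - 1) with hw
  have hw' : w + σ * (d - 1) = s * α + B := Nat.sub_add_cancel (by lia)
  have hdw : d ≤ l * w := hdB.trans (Nat.mul_le_mul_left l (by lia))
  have hα0 : 0 < α := by rcases Nat.eq_zero_or_pos α with rfl | h <;> lia
  have hbox := card_weightedBox_sub_one_add_sum_div hl hα hα0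
  have ha := card_weightedBox_add_sum_ceilDiv hl (hdw.trans (Nat.le_succ _))
  have hb := card_weightedBox_add_sum_ceilDiv hl (hdB.trans (Nat.le_succ _))
  have hbs : d * (B + 1) ≤ s * d := by rw [mul_comm s]; exact Nat.mul_le_mul_left d hBs
  refine ⟨B, w, hBs, ?_, ?_, hBle⟩
  · nth_rw 1 [hσ]
    linear_combination l * hw'
  · rw [show (weightedBox l d (l * α - 1)).card = T - 1 by lia]
    exact pred_mul_tsub_lt_of_lt hσ hd0 hT hT0 hsum hw' (by lia) (by lia) (by lia) hBlt

end BoxCounts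

section PointBounds

variable {K : Type*} [Field K] [Fintype K] {p e q v r e₁ e₂ α d g T : ℕ} {c : ℕ → K}
  [Fact p.Prime] [CharP K p]

theorem mul_mul_card_unramifiedFibres_le (hq : q = p ^ e) (he : e ≠ 0) (hv : v ≠ 0) (hr : r ≠ 0)
    (hc : c r = 1) (hgcd : ∀ g, (∀ i ≤ r, c i ≠ 0 → g ∣ v + i) → g = 1)
    (hcardK : Fintype.card K = p ^ (e₁ + e₂)) (hd : d + q = q ^ v * q ^ r) (hd0 : d ≠ 0)
    (hs : q ^ v ∣ p ^ e₁) (hds : d ≤ q ^ v * p ^ e₁) (hα : d ≤ q ^ v * α)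
    (hα' : d * (α + 1) < p ^ e₂) (hg : ∑ j ∈ Finset.range d, j / q ^ v + 1 = g + q ^ r)
    (hT : T + ∑ j ∈ Finset.range d, j / q ^ v = d * α + 1) (hT0 : T ≠ 0) :
    T * (d * (unramifiedFibres q r c).card + 1) ≤
      T * ((rationalPoints q v r c).card + p ^ (e₁ + e₂) * (d - 1) + p ^ e₂ * (g + 1 + d)) +
        p ^ (e₁ + e₂) * (g + 1) := by
  have hq0 : 0 < q := by rw [hq]; exact pow_pos (Fact.out : p.Prime).pos e
  by_cases hsT : T * (g + 1 + d) + p ^ e₁ * (g + 1) ≤ p ^ e₁ * T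
  · obtain ⟨B, wA, hBs, hwA, hcount, hB⟩ := exists_stepanov_weights hd0 hd (by positivity)
      (Nat.le_self_pow hv q) (by positivity) hs hds hα hg hT hT0 hsT
    have hdD : d = q ^ (v + r) - q := by rw [pow_add, ← hd, Nat.add_sub_cancel]
    have hbound := card_unramifiedFibres_mul_le hq he hv hr hc hgcd hcardK hdD hBs hα'
      (by rw [hwA]) hcount
    have hB' := Nat.mul_le_mul_left (p ^ e₂) hB
    have hbound' := Nat.mul_le_mul_left T hbound
    have hα'' := Nat.mul_le_mul_left T hα'
    rw [pow_add]
    generalize d - 1 = d' at *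
    lia
  · have hle : (unramifiedFibres q r c).card ≤ p ^ e₁ * p ^ e₂ := by
      rw [← pow_add, ← hcardK]; exact Finset.card_le_univ _
    have hTs : T ≤ p ^ e₂ := by lia
    have hsT' := Nat.mul_le_mul_left (p ^ e₂) (Nat.succ_le_of_lt (not_le.1 hsT))
    have hle' := Nat.mul_le_mul_left (T * d) hle
    obtain ⟨d, rfl⟩ := Nat.exists_eq_succ_of_ne_zero hd0
    rw [pow_add, Nat.succ_sub_one]
    lia

end PointBounds

section Numerics

lemma exists_sum_range_div_add_one_eq {l ρ q d : ℕ} (hl : 0 < l) (hql : q ≤ l) (hρ : ρ ≠ 0)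
    (hd : d + q = l * ρ) (hqd : q + 2 ≤ d) :
    ∃ g : ℕ, ∑ j ∈ Finset.range d, j / l + 1 = g + ρ ∧
      2 * (g : ℝ) = ((ρ : ℝ) - 1) * (d - q - 2) := by
  have hF := two_mul_sum_range_div_add hl hql hρ hd
  obtain ⟨ρ, rfl⟩ := Nat.exists_eq_succ_of_ne_zero hρ
  obtain ⟨t, rfl⟩ := Nat.exists_eq_add_of_le hqd
  rw [← hd, Nat.succ_sub_one] at hF
  have hle : ρ ≤ ∑ j ∈ Finset.range (q + 2 + t), j / l := by lia
  obtain ⟨g, hg⟩ := Nat.exists_eq_add_of_le' hle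
  refine ⟨g, by lia, ?_⟩
  rw [hg] at hF
  have hF' := congrArg (Nat.cast (R := ℝ)) hF
  push_cast at hF' ⊢
  linarith

lemma stepanov_numerics {R s' X θ ε d g ρ D E T : ℝ} (hR : 0 < R) (hs' : s' ≤ X * R)
    (hT : s' - (2 * d + g + ρ - 2) ≤ T) (hRs' : R ≤ s') (hW : 2 * d + g + ρ - 2 ≤ θ * R)
    (hθ : θ < 1) (hg : 0 ≤ g) (hd : 0 ≤ d) (hmain : X * (g + 1 + d) + (g + 1) / (1 - θ) + ε ≤ E)
    (hε : (D - 1) * ρ - 2 * ρ - D ≤ ε * R) :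
    0 < T ∧ T * (s' * (g + 1 + d)) + R ^ 2 * (g + 1) + T * ((D - 1) * ρ) ≤
      T * (E * R + 2 * ρ + D) := by
  have hθ' : 0 < 1 - θ := sub_pos.2 hθ
  have hTR : (1 - θ) * R ≤ T := by linarith
  have hT0 : 0 < T := lt_of_lt_of_le (by positivity) hTR
  refine ⟨hT0, ?_⟩
  have hfirst : T * (s' * (g + 1 + d)) ≤ T * (X * R * (g + 1 + d)) := by gcongr
  have hsecond : R ^ 2 * (g + 1) ≤ T * (R * ((g + 1) / (1 - θ))) :=
    calc R ^ 2 * (g + 1) = (1 - θ) * R * (R * ((g + 1) / (1 - θ))) := by field_simp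
      _ ≤ T * (R * ((g + 1) / (1 - θ))) := by gcongr
  have hmain' := mul_le_mul_of_nonneg_left hmain (mul_pos hT0 hR).le
  have hε' := mul_le_mul_of_nonneg_left hε hT0.le
  linarith

end Numerics

section PointBounds

variable {K : Type*} [Field K] [Fintype K] {p e q v r e₁ e₂ α d g m κ : ℕ} {c : ℕ → K}
  [Fact p.Prime] [CharP K p]

theorem le_card_rationalPoints_of_mul_le {T : ℕ} (hq : q = p ^ e) (he : e ≠ 0) (hv : v ≠ 0)
    (hr : r ≠ 0) (hc : c r = 1) (hgcd : ∀ g, (∀ i ≤ r, c i ≠ 0 → g ∣ v + i) → g = 1)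
    (hcardK : Fintype.card K = p ^ (e₁ + e₂)) (hd : d + q = q ^ v * q ^ r) (hd0 : d ≠ 0)
    (hs : q ^ v ∣ p ^ e₁) (hds : d ≤ q ^ v * p ^ e₁) (hα : d ≤ q ^ v * α)
    (hα' : d * (α + 1) < p ^ e₂) (hg : ∑ j ∈ Finset.range d, j / q ^ v + 1 = g + q ^ r)
    (hT : T + ∑ j ∈ Finset.range d, j / q ^ v = d * α + 1) (hT0 : T ≠ 0)
    (hκ : p ^ (e₁ + e₂) ≤ (unramifiedFibres q r c).card + κ) (hκρ : κ ≤ q ^ r) {y : ℝ}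
    (hy : (T : ℝ) * (p ^ e₂ * (g + 1 + d)) + p ^ (e₁ + e₂) * (g + 1) +
      T * ((q ^ (v + r) - 1) * q ^ r) ≤ T * (y + 2 * q ^ r + q ^ (v + r))) :
    (p : ℝ) ^ (e₁ + e₂) - y - 2 * q ^ r - q ^ (v + r) + (q - 1) * κ + 1 ≤
      (rationalPoints q v r c).card := by
  have hbound := mul_mul_card_unramifiedFibres_le hq he hv hr hc hgcd hcardK hd hd0 hs hds hα hα'
    hg hT hT0
  have hD : (q : ℝ) ^ (v + r) = d + q := by rw [pow_add]; exact_mod_cast hd.symm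
  have hκ₁ := Nat.mul_le_mul_left (T * d) hκ
  have hκ₂ := Nat.mul_le_mul_left (T * (d + q - 1)) hκρ
  obtain ⟨d, rfl⟩ := Nat.exists_eq_succ_of_ne_zero hd0
  rw [Nat.succ_sub_one] at hbound
  rw [hD] at hy ⊢
  zify [show 1 ≤ d.succ + q by lia] at hbound hκ₁ hκ₂
  rify at hbound hκ₁ hκ₂
  have hT0' : (0 : ℝ) < T := by positivity
  refine le_of_mul_le_mul_left ?_ hT0'
  push_cast at *
  linarith

lemma pow_dvd_pow_of_lt (hq : q = p ^ e) (h : q ^ v < p ^ (m + 1)) : q ^ v ∣ p ^ m := by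
  rw [hq, ← pow_mul] at h ⊢
  exact pow_dvd_pow p (Nat.lt_succ_iff.1
    ((Nat.pow_lt_pow_iff_right (Fact.out : p.Prime).one_lt).1 h))

lemma exists_mul_lt_and_le_mul {β s : ℕ} (hd : 0 < d) (hβ : d * (β + 2) ≤ s) :
    ∃ α, β ≤ α ∧ d * (α + 1) < s ∧ s ≤ d * (α + 2) := by
  have hle : β + 1 ≤ (s - 1) / d := by
    rw [Nat.le_div_iff_mul_le hd]; lia
  obtain ⟨α, hα⟩ := Nat.exists_eq_add_of_le' (le_trans (Nat.le_add_left 1 β) hle)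
  refine ⟨α, by lia, ?_, ?_⟩
  · have := Nat.mul_div_le (s - 1) d
    rw [hα] at this
    lia
  · have := Nat.lt_mul_div_succ (s - 1) hd
    rw [hα] at this
    lia

end PointBounds

section Numerics

lemma generic_numerics {l ρ q d g : ℝ} (hq : 2 ≤ q) (hl : q ≤ l) (hρ : q ≤ ρ) (hd : d + q = l * ρ)
    (hD : 16 ≤ l * ρ) (hg : 2 * g = (ρ - 1) * (d - q - 2)) (hl3 : l = 2 ∨ 3 ≤ l) :
    2 * (2 * d + g + ρ - 2) ≤ (d - 1) * (d - 2) ∧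
    (q + 1) / 2 * (g + 1 + d) + 2 * (g + 1) + 1 ≤ (d - 1) * (d - 2) ∧
    (d + q - 1) * ρ - 2 * ρ - (d + q) ≤ (d - 1) * (d - 2) ∧
    d * (ρ + 2) ≤ (d - 1) * (d - 2) ∧ q + 2 ≤ d := by
  rcases hl3 with rfl | hl3
  · obtain rfl : q = 2 := le_antisymm hl hq
    have h8 : 8 ≤ ρ := by linarith
    obtain rfl : d = 2 * ρ - 2 := by linarith
    obtain rfl : g = (ρ - 1) * (ρ - 3) := by linarith
    refine ⟨?_, ?_, ?_, ?_, ?_⟩ <;> nlinarith [h8]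
  · have h4q : 4 * q ≤ d + q := by
      have : q * q ≤ l * ρ := mul_le_mul hl hρ (by linarith) (by linarith)
      by_cases h : q ≤ 4 <;> nlinarith
    have h3r : 3 * ρ ≤ d + q := by
      rw [hd]; exact mul_le_mul_of_nonneg_right hl3 (by linarith)
    have hqr : q * ρ ≤ d + q := by
      rw [hd]; exact mul_le_mul_of_nonneg_right hl (by linarith)
    refine ⟨?_, ?_, ?_, ?_, by linarith⟩
    · have : (ρ - 1) * (d - q) ≤ ((d + q) / 3 - 1) * (d - q) :=
        mul_le_mul_of_nonneg_right (by linarith) (by linarith)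
      nlinarith
    · have h2 : (q + 5) * (ρ - 1) * (d - q) ≤ (8 / 3 * (d + q) - q - 5) * (d - q) :=
        mul_le_mul_of_nonneg_right (by linarith) (by linarith)
      nlinarith
    · have : (d + q - 3) * ρ ≤ (d + q - 3) * ((d + q) / 3) :=
        mul_le_mul_of_nonneg_left (by linarith) (by linarith)
      nlinarith
    · have : d * ρ ≤ d * ((d + q) / 3) := mul_le_mul_of_nonneg_left (by linarith) (by linarith)
      nlinarith

lemma le_pow_half_of_sq_eq {p m : ℕ} {R : ℝ} (hp : 1 ≤ p) (hR : R ^ 2 = (p : ℝ) ^ m) :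
    R ≤ (p : ℝ) ^ ((m + 1) / 2) := by
  refine le_of_abs_le ((sq_le_sq₀ (abs_nonneg R) (by positivity)).1 ?_)
  rw [sq_abs, hR, ← pow_mul]
  exact pow_le_pow_right₀ (mod_cast hp) (by lia)

lemma pow_half_le_mul_of_sq_eq {p m : ℕ} {R X : ℝ} (hp : 1 ≤ p) (hR0 : 0 ≤ R)
    (hR : R ^ 2 = (p : ℝ) ^ m) (hX : 0 ≤ X) (hpX : p ≤ X ^ 2) :
    (p : ℝ) ^ ((m + 1) / 2) ≤ X * R := by
  refine (sq_le_sq₀ (by positivity) (by positivity)).1 ?_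
  calc ((p : ℝ) ^ ((m + 1) / 2)) ^ 2 ≤ p ^ (m + 1) := by
        rw [← pow_mul]; exact pow_le_pow_right₀ (mod_cast hp) (by lia)
    _ = p * R ^ 2 := by rw [hR, pow_succ']
    _ ≤ (X * R) ^ 2 := by rw [mul_pow]; gcongr

end Numerics

section PointBounds

variable {K : Type*} [Field K] [Fintype K] {p e q v r d m κ : ℕ} {c : ℕ → K}
  [Fact p.Prime] [CharP K p]

theorem le_card_rationalPoints_of_numerics {β : ℕ} (hq : q = p ^ e) (he : e ≠ 0) (hv : v ≠ 0)
    (hr : r ≠ 0) (hc : c r = 1) (hgcd : ∀ g, (∀ i ≤ r, c i ≠ 0 → g ∣ v + i) → g = 1)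
    (hcardK : Fintype.card K = p ^ m) (hd : d + q = q ^ v * q ^ r) (hqd : q + 2 ≤ d)
    (hβ : d ≤ q ^ v * β) (hβ' : d * (β + 2) ≤ p ^ ((m + 1) / 2))
    (hκ : p ^ m ≤ (unramifiedFibres q r c).card + κ) (hκρ : κ ≤ q ^ r) {R X θ ε g E : ℝ}
    (hR0 : 0 < R) (hR : R ^ 2 = (p : ℝ) ^ m) (hX : 0 ≤ X) (hpX : p ≤ X ^ 2)
    (hg : 2 * g = ((q : ℝ) ^ r - 1) * (d - q - 2)) (hW : 2 * d + g + q ^ r - 2 ≤ θ * R)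
    (hθ : θ < 1) (hmain : X * (g + 1 + d) + (g + 1) / (1 - θ) + ε ≤ E)
    (hε : ((q : ℝ) ^ (v + r) - 1) * q ^ r - 2 * q ^ r - q ^ (v + r) ≤ ε * R) :
    (p : ℝ) ^ m - E * R - 2 * q ^ r - q ^ (v + r) + (q - 1) * κ + 1 ≤
      (rationalPoints q v r c).card := by
  have hp1 : 1 ≤ p := (Fact.out : p.Prime).pos
  have hq0 : 0 < q := hq ▸ pow_pos hp1 e
  have hqv : q ≤ q ^ v := Nat.le_self_pow hv q
  have hqr : 2 ≤ q ^ r :=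
    (one_lt_of_eq_pow hq he).trans_le (Nat.le_self_pow hr q)
  have hvd : q ^ v ≤ d := by
    have := Nat.mul_le_mul_left (q ^ v) hqr
    lia
  have hds' : d < p ^ (m / 2 + 1) :=
    calc d < d * (β + 2) := by rw [mul_add]; lia
      _ ≤ p ^ ((m + 1) / 2) := hβ'
      _ ≤ p ^ (m / 2 + 1) := Nat.pow_le_pow_right hp1 (by lia)
  have hds : d ≤ q ^ v * p ^ (m / 2) := by
    rw [pow_succ'] at hds'
    refine hds'.le.trans (Nat.mul_le_mul_right _ (le_trans ?_ hqv))
    rw [hq]; exact Nat.le_self_pow he p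
  obtain ⟨α, hβα, hα, hα'⟩ := exists_mul_lt_and_le_mul (by lia) hβ'
  obtain ⟨G, hG, hGd⟩ := exists_sum_range_div_add_one_eq (by positivity) hqv (by positivity) hd hqd
  obtain rfl : g = G := by push_cast at hGd; linarith
  set F := ∑ j ∈ Finset.range d, j / q ^ v
  set T : ℝ := d * α + 1 - F with hT
  have hFG : (F : ℝ) + 1 = G + q ^ r := by exact_mod_cast hG
  have hsT : (p : ℝ) ^ ((m + 1) / 2) ≤ d * (α + 2) := by exact_mod_cast hα'
  obtain ⟨hT0, hmain⟩ := stepanov_numerics (D := (q : ℝ) ^ (v + r)) (T := T) hR0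
    (pow_half_le_mul_of_sq_eq hp1 hR0.le hR hX hpX) (by linarith [hT])
    (le_pow_half_of_sq_eq hp1 hR) hW hθ G.cast_nonneg d.cast_nonneg hmain hε
  have hFα : F < d * α + 1 := by exact_mod_cast sub_pos.1 hT0
  have hTn : ((d * α + 1 - F : ℕ) : ℝ) = T := by rw [Nat.cast_sub hFα.le]; push_cast; rfl
  have hm : m / 2 + (m + 1) / 2 = m := by lia
  have hpts := le_card_rationalPoints_of_mul_le (κ := κ) (y := E * R) hq he hv hr hc
    hgcd (by rwa [hm]) hd (by lia)
    (pow_dvd_pow_of_lt hq (hvd.trans_lt hds')) hds (hβ.trans (Nat.mul_le_mul_left _ hβα)) hα hG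
    (Nat.sub_add_cancel hFα.le) (by lia) (by rwa [hm]) hκρ (by rwa [hTn, hm, ← hR])
  rwa [hm] at hpts

theorem le_card_rationalPoints_of_sixteen_le (hq : q = p ^ e) (he : e ≠ 0) (hv : v ≠ 0)
    (hr : r ≠ 0) (hc : c r = 1) (hgcd : ∀ g, (∀ i ≤ r, c i ≠ 0 → g ∣ v + i) → g = 1)
    (hcardK : Fintype.card K = p ^ m) (hd : d + q = q ^ v * q ^ r) (hD : 16 ≤ q ^ (v + r))
    (hκ : p ^ m ≤ (unramifiedFibres q r c).card + κ) (hκρ : κ ≤ q ^ r) {R : ℝ}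
    (hR0 : 0 < R) (hR : R ^ 2 = (p : ℝ) ^ m) (hE : ((d : ℝ) - 1) * (d - 2) < R) :
    (p : ℝ) ^ m - (d - 1) * (d - 2) * R - 2 * q ^ r - q ^ (v + r) + (q - 1) * κ + 1 ≤
      (rationalPoints q v r c).card := by
  have hq2 : 2 ≤ q := one_lt_of_eq_pow hq he
  have hqv : q ≤ q ^ v := Nat.le_self_pow hv q
  have hqr : q ≤ q ^ r := Nat.le_self_pow hr q
  have hpq : (p : ℝ) ≤ q := by rw [hq]; exact_mod_cast Nat.le_self_pow he p
  have hDd : (q : ℝ) ^ (v + r) = d + q := by rw [pow_add]; exact_mod_cast hd.symm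
  have hq2' : (2 : ℝ) ≤ q := by exact_mod_cast hq2
  obtain ⟨hW, hmain, hε, hb, hqd⟩ := generic_numerics hq2' (d := d) (l := (q : ℝ) ^ v)
    (ρ := (q : ℝ) ^ r) (g := ((q : ℝ) ^ r - 1) * (d - q - 2) / 2)
    (by exact_mod_cast hqv) (by exact_mod_cast hqr) (by exact_mod_cast hd)
    (by rw [← pow_add]; exact_mod_cast hD) (by ring)
    (by have : q ^ v = 2 ∨ 3 ≤ q ^ v := by lia
        exact_mod_cast this)
  have hb' : (d : ℝ) * (q ^ r + 2) ≤ p ^ ((m + 1) / 2) :=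
    hb.trans (hE.le.trans (le_pow_half_of_sq_eq (Fact.out : p.Prime).pos hR))
  refine le_card_rationalPoints_of_numerics (β := q ^ r) (X := (q + 1) / 2) (θ := 1 / 2) (ε := 1)
    (E := (d - 1) * (d - 2)) hq he hv hr hc hgcd hcardK hd (by exact_mod_cast hqd) (by lia)
    (by exact_mod_cast hb') hκ hκρ hR0 hR (by positivity) (by nlinarith)
    (mul_div_cancel₀ _ two_ne_zero) (by linarith) (by norm_num) ?_ (by rw [hDd]; linarith)
  rw [sub_half, div_div_eq_mul_div, div_one]
  linarith

lemma lt_of_pow_lt_of_lt_sq {R x : ℝ} {b j : ℕ} (hb : 1 < b) (hx : 0 ≤ x) (hxR : x < R)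
    (hR : R ^ 2 = (b : ℝ) ^ m) (hj : (b : ℝ) ^ j ≤ x ^ 2) : j < m := by
  have : (b : ℝ) ^ j < b ^ m := by
    rw [← hR]; exact hj.trans_lt (by gcongr)
  exact (pow_lt_pow_iff_right₀ (by exact_mod_cast hb)).1 this

theorem le_card_rationalPoints_two_two_one [CharP K 2] (hc : c 1 = 1)
    (hgcd : ∀ g, (∀ i ≤ 1, c i ≠ 0 → g ∣ 2 + i) → g = 1) (hcardK : Fintype.card K = 2 ^ m)
    (hκ : 2 ^ m ≤ (unramifiedFibres 2 1 c).card + κ) (hκρ : κ ≤ 2) {R : ℝ}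
    (hR : R ^ 2 = (2 : ℝ) ^ m) (hE : 20 < R) :
    (2 : ℝ) ^ m - 20 * R - 12 + κ + 1 ≤ (rationalPoints 2 2 1 c).card := by
  have hm : 8 < m :=
    lt_of_pow_lt_of_lt_sq one_lt_two (by norm_num) hE (by exact_mod_cast hR) (by norm_num)
  have hs : 2 ^ 5 ≤ 2 ^ ((m + 1) / 2) := Nat.pow_le_pow_right two_pos (by lia)
  have := le_card_rationalPoints_of_numerics (p := 2) (e := 1) (q := 2) (v := 2) (r := 1) (d := 6)
    (β := 2) (X := 3 / 2) (θ := 13 / 20) (ε := 1) (g := 1) (E := 20) (R := R) (by norm_num)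
    one_ne_zero two_ne_zero one_ne_zero hc hgcd hcardK (by norm_num) (by norm_num) (by norm_num)
    (by lia) hκ hκρ (by linarith) (by exact_mod_cast hR) (by norm_num) (by norm_num) (by norm_num)
    (by norm_num; linarith) (by norm_num) (by norm_num) (by norm_num; linarith)
  norm_num at this
  linarith

theorem le_card_rationalPoints_three_one_one [CharP K 3] (hc : c 1 = 1)
    (hgcd : ∀ g, (∀ i ≤ 1, c i ≠ 0 → g ∣ 1 + i) → g = 1) (hcardK : Fintype.card K = 3 ^ m)
    (hκ : 3 ^ m ≤ (unramifiedFibres 3 1 c).card + κ) (hκρ : κ ≤ 3) {R : ℝ}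
    (hR : R ^ 2 = (3 : ℝ) ^ m) (hE : 20 < R) :
    (3 : ℝ) ^ m - 20 * R - 15 + 2 * κ + 1 ≤ (rationalPoints 3 1 1 c).card := by
  have hm : 5 < m := lt_of_pow_lt_of_lt_sq (b := 3) (by norm_num) (by norm_num) hE
    (by exact_mod_cast hR) (by norm_num)
  have hs : 3 ^ 3 ≤ 3 ^ ((m + 1) / 2) := Nat.pow_le_pow_right three_pos (by lia)
  have hR27 : 27 ≤ R := by
    refine (sq_le_sq₀ (by norm_num) (by linarith)).1 ?_
    rw [hR]
    calc (27 : ℝ) ^ 2 = 3 ^ 6 := by norm_num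
      _ ≤ 3 ^ m := pow_le_pow_right₀ (by norm_num) hm
  have := le_card_rationalPoints_of_numerics (p := 3) (e := 1) (q := 3) (v := 1) (r := 1) (d := 6)
    (β := 2) (X := 7 / 4) (θ := 14 / 27) (ε := 1 / 3) (g := 1) (E := 20) (R := R) (by norm_num)
    one_ne_zero one_ne_zero one_ne_zero hc hgcd hcardK (by norm_num) (by norm_num) (by norm_num)
    (by lia) hκ hκρ (by linarith) (by exact_mod_cast hR) (by norm_num) (by norm_num) (by norm_num)
    (by norm_num; linarith) (by norm_num) (by norm_num) (by norm_num; linarith)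
  norm_num at this
  linarith

theorem le_card_rationalPoints_two_one_two_of_mul_le [CharP K 2] {e₁ e₂ α T : ℕ} (hc : c 2 = 1)
    (hgcd : ∀ g, (∀ i ≤ 2, c i ≠ 0 → g ∣ 1 + i) → g = 1) (hcardK : Fintype.card K = 2 ^ (e₁ + e₂))
    (hκ : 2 ^ (e₁ + e₂) ≤ (unramifiedFibres 2 2 c).card + κ) (hκρ : κ ≤ 4) {R : ℝ}
    (he₁ : 2 ≤ e₁) (hα : 3 ≤ α) (hα' : 6 * (α + 1) < 2 ^ e₂) (hT : T + 5 = 6 * α)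
    (hR : (T : ℝ) * (2 ^ e₂ * 10 + 12) + 2 ^ (e₁ + e₂) * 4 ≤ T * (20 * R)) :
    (2 : ℝ) ^ (e₁ + e₂) - 20 * R - 16 + κ + 1 ≤ (rationalPoints 2 1 2 c).card := by
  have := le_card_rationalPoints_of_mul_le (p := 2) (e := 1) (q := 2) (v := 1) (r := 2) (d := 6)
    (α := α) (g := 3) (T := T) (y := 20 * R) (by norm_num) one_ne_zero one_ne_zero two_ne_zero hc
    hgcd hcardK (by norm_num) (by norm_num) (pow_dvd_pow 2 (by lia))
    (by have := Nat.pow_le_pow_right two_pos he₁; lia) (by lia) hα'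
    (by decide) (by simp [Finset.sum_range_succ]; lia) (by lia) hκ hκρ
    (by norm_num; linarith)
  norm_num at this
  linarith

theorem le_card_rationalPoints_two_one_two [CharP K 2] (hc : c 2 = 1)
    (hgcd : ∀ g, (∀ i ≤ 2, c i ≠ 0 → g ∣ 1 + i) → g = 1) (hcardK : Fintype.card K = 2 ^ m)
    (hκ : 2 ^ m ≤ (unramifiedFibres 2 2 c).card + κ) (hκρ : κ ≤ 4) {R : ℝ}
    (hR : R ^ 2 = (2 : ℝ) ^ m) (hE : 20 < R) :
    (2 : ℝ) ^ m - 20 * R - 16 + κ + 1 ≤ (rationalPoints 2 1 2 c).card := by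
  have hm : 8 < m :=
    lt_of_pow_lt_of_lt_sq one_lt_two (by norm_num) hE (by exact_mod_cast hR) (by norm_num)
  have hcases : m = 9 ∨ m = 10 ∨ m = 11 ∨ 12 ≤ m := by lia
  rcases hcases with rfl | rfl | rfl | hm
  · exact le_card_rationalPoints_two_one_two_of_mul_le (e₁ := 4) (e₂ := 5) (α := 4) (T := 19) hc
      hgcd hcardK hκ hκρ (by norm_num) (by norm_num) (by norm_num) (by norm_num)
      (by norm_num; nlinarith)
  · exact le_card_rationalPoints_two_one_two_of_mul_le (e₁ := 5) (e₂ := 5) (α := 4) (T := 19) hc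
      hgcd hcardK hκ hκρ (by norm_num) (by norm_num) (by norm_num) (by norm_num)
      (by norm_num; nlinarith)
  · exact le_card_rationalPoints_two_one_two_of_mul_le (e₁ := 5) (e₂ := 6) (α := 9) (T := 49) hc
      hgcd hcardK hκ hκρ (by norm_num) (by norm_num) (by norm_num) (by norm_num)
      (by norm_num; nlinarith)
  have hs : 2 ^ 6 ≤ 2 ^ ((m + 1) / 2) := Nat.pow_le_pow_right two_pos (by lia)
  have hR64 : 64 ≤ R := by
    refine (sq_le_sq₀ (by norm_num) (by linarith)).1 ?_
    rw [hR]
    calc (64 : ℝ) ^ 2 = 2 ^ 12 := by norm_num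
      _ ≤ 2 ^ m := pow_le_pow_right₀ (by norm_num) hm
  have := le_card_rationalPoints_of_numerics (p := 2) (e := 1) (q := 2) (v := 1) (r := 2) (d := 6)
    (β := 3) (X := 1.4143) (θ := 17 / 64) (ε := 12 / 64) (g := 3) (E := 20) (R := R) (by norm_num)
    one_ne_zero one_ne_zero two_ne_zero hc hgcd hcardK (by norm_num) (by norm_num) (by norm_num)
    (by lia) hκ hκρ (by linarith) (by exact_mod_cast hR) (by norm_num) (by norm_num) (by norm_num)
    (by norm_num; linarith) (by norm_num) (by norm_num) (by norm_num; linarith)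
  norm_num at this
  linarith

theorem le_card_rationalPoints (hq : q = p ^ e) (he : e ≠ 0) (hv : v ≠ 0)
    (hr : r ≠ 0) (hc : c r = 1) (hgcd : ∀ g, (∀ i ≤ r, c i ≠ 0 → g ∣ v + i) → g = 1)
    (hcardK : Fintype.card K = p ^ m) (hex : ¬(q = 2 ∧ v = 1 ∧ r = 1))
    (hκ : p ^ m ≤ (unramifiedFibres q r c).card + κ) (hκρ : κ ≤ q ^ r) {R : ℝ}
    (hR0 : 0 < R) (hR : R ^ 2 = (p : ℝ) ^ m)
    (hE : ((q : ℝ) ^ (v + r) - q - 1) * ((q : ℝ) ^ (v + r) - q - 2) < R) :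
    (p : ℝ) ^ m - ((q : ℝ) ^ (v + r) - q - 1) * ((q : ℝ) ^ (v + r) - q - 2) * R - 2 * q ^ r
      - q ^ (v + r) + (q - 1) * κ + 1 ≤ (rationalPoints q v r c).card := by
  have hq2 : 2 ≤ q := one_lt_of_eq_pow hq he
  rcases le_or_gt 16 (q ^ (v + r)) with hD | hD
  · obtain ⟨d, hd⟩ := Nat.exists_eq_add_of_le' (Nat.le_self_pow (by lia : v + r ≠ 0) q)
    have hd' : (q : ℝ) ^ (v + r) - q = d := by rw [sub_eq_iff_eq_add]; exact_mod_cast hd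
    rw [hd'] at hE ⊢
    exact le_card_rationalPoints_of_sixteen_le hq he hv hr hc hgcd hcardK
      (by rw [← hd, pow_add]) hD hκ hκρ hR0 hR hE
  have hq4 : q < 4 := lt_of_pow_lt_pow_left₀ 2 (by lia)
    ((Nat.pow_le_pow_right (by lia) (by lia : 2 ≤ v + r)).trans_lt hD)
  have hvr4 : v + r < 4 := (Nat.pow_lt_pow_iff_right one_lt_two).1
    ((Nat.pow_le_pow_left hq2 (v + r)).trans_lt hD)
  have hqvr : (q = 2 ∧ v = 2 ∧ r = 1) ∨ (q = 2 ∧ v = 1 ∧ r = 2) ∨ (q = 3 ∧ v = 1 ∧ r = 1) := by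
    have : v + r = 2 ∨ q = 2 := by
      by_contra!
      obtain ⟨rfl, h3⟩ : q = 3 ∧ v + r = 3 := by lia
      lia
    lia
  have hpq : q.Prime → p = q := fun h =>
    (Nat.prime_dvd_prime_iff_eq Fact.out h).1 (hq ▸ dvd_pow_self p he)
  rcases hqvr with ⟨rfl, rfl, rfl⟩ | ⟨rfl, rfl, rfl⟩ | ⟨rfl, rfl, rfl⟩
  · obtain rfl := hpq Nat.prime_two
    have := le_card_rationalPoints_two_two_one hc hgcd hcardK hκ hκρ (mod_cast hR)
      (by norm_num at hE; exact hE)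
    norm_num
    linarith
  · obtain rfl := hpq Nat.prime_two
    have := le_card_rationalPoints_two_one_two hc hgcd hcardK hκ hκρ (mod_cast hR)
      (by norm_num at hE; exact hE)
    norm_num
    linarith
  · obtain rfl := hpq Nat.prime_three
    have := le_card_rationalPoints_three_one_one hc hgcd hcardK hκ hκρ (mod_cast hR)
      (by norm_num at hE; exact hE)
    norm_num
    linarith

end PointBounds

section Weight

variable {F K : Type*} [Field F] [Field K] [Algebra F K] (φ : K →ₗ[F] K)

/-- The weight of `m` with respect to `φ`: the dimension of the kernel of `x ↦ φ x - m * x`. -/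
noncomputable def weight (m : K) : ℕ :=
  Module.finrank F (LinearMap.ker (φ - LinearMap.mulLeft F m))

lemma mem_ker_sub_mulLeft {m x : K} :
    x ∈ LinearMap.ker (φ - LinearMap.mulLeft F m) ↔ φ x = m * x := by
  simp [sub_eq_zero]

/-- The ordered pairs of `F`-linearly independent elements whose members are scaled by `φ` by the
same factor, i.e. which lie in a common kernel `ker (φ - m)`. -/
noncomputable def independentPairs [Fintype K] : Finset (K × K) :=
  open Classical in {x | LinearIndependent F ![x.1, x.2] ∧ φ x.1 * x.2 = φ x.2 * x.1}

variable {φ}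

lemma mem_independentPairs [Fintype K] {x : K × K} : x ∈ independentPairs φ ↔
    LinearIndependent F ![x.1, x.2] ∧ φ x.1 * x.2 = φ x.2 * x.1 := by
  simp [independentPairs]

lemma mk_mul_mem_independentPairs [Fintype K] {Q : ℕ} (hF : ∀ u : F, u ^ Q = u) {x t : K}
    (hx : x ≠ 0) (ht : t ^ Q ≠ t) (hφ : φ (t * x) = t * φ x) :
    (x, t * x) ∈ independentPairs φ := by
  refine mem_independentPairs.2 ⟨(LinearIndependent.pair_iff' hx).2 fun u hu => ht ?_, ?_⟩
  · rw [Algebra.smul_def] at hu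
    rw [← mul_right_cancel₀ hx hu, ← map_pow, hF]
  · rw [hφ]; ring

lemma natCard_eq_pow_weight [Fintype F] [Finite K] (m : K) :
    Nat.card {x : K // φ x = m * x} = Fintype.card F ^ weight φ m := by
  have := Module.natCard_eq_pow_finrank (K := F)
    (V := LinearMap.ker (φ - LinearMap.mulLeft F m))
  rw [Nat.card_eq_fintype_card (α := F)] at this
  rw [weight, ← this]
  exact Nat.card_congr (Equiv.subtypeEquivRight fun x => (mem_ker_sub_mulLeft φ).symm)

lemma log_natCard_eq_weight [Fintype F] [Finite K] (m : K) :
    Nat.log (Fintype.card F) (Nat.card {x : K // φ x = m * x}) = weight φ m := by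
  rw [natCard_eq_pow_weight, Nat.log_pow Fintype.one_lt_card]

lemma card_linearIndependent_pair [Fintype F] {V : Type*} [AddCommGroup V] [Module F V]
    [Finite V] : Nat.card {s : Fin 2 → V // LinearIndependent F s} =
      (Fintype.card F ^ Module.finrank F V - 1) *
        (Fintype.card F ^ Module.finrank F V - Fintype.card F) := by
  rcases le_or_gt 2 (Module.finrank F V) with h | h
  · rw [card_linearIndependent h, Fin.prod_univ_two]
    simp
  · have : IsEmpty {s : Fin 2 → V // LinearIndependent F s} :=
      ⟨fun s => by have := s.2.fintype_card_le_finrank; simp at this; lia⟩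
    rw [Nat.card_of_isEmpty]
    interval_cases Module.finrank F V <;> simp

variable [Fintype K]

lemma card_filter_independentPairs_le [Fintype F] [DecidableEq K] (m : K) :
    {x ∈ independentPairs φ | φ x.1 / x.1 = m}.card ≤
      (Fintype.card F ^ weight φ m - 1) * (Fintype.card F ^ weight φ m - Fintype.card F) := by
  classical
  set V := LinearMap.ker (φ - LinearMap.mulLeft F m)
  rw [weight, ← card_linearIndependent_pair, Nat.card_eq_fintype_card, ← Finset.card_univ]
  refine (Finset.card_le_card (t := Finset.univ.image
    fun s : {s : Fin 2 → V // LinearIndependent F s} => ((s.1 0 : K), (s.1 1 : K)))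
    fun ⟨x, y⟩ hxy => ?_).trans Finset.card_image_le
  obtain ⟨hli, hφ⟩ := mem_independentPairs.1 (Finset.mem_filter.1 hxy).1
  have hx0 : x ≠ 0 := hli.ne_zero 0
  have hx : φ x = m * x := (div_eq_iff hx0).1 (Finset.mem_filter.1 hxy).2
  have hy : φ y = m * y := mul_right_cancel₀ hx0 (by rw [← hφ, hx]; ring)
  refine Finset.mem_image.2 ⟨⟨![⟨x, (mem_ker_sub_mulLeft φ).2 hx⟩,
    ⟨y, (mem_ker_sub_mulLeft φ).2 hy⟩], .of_comp V.subtype ?_⟩, Finset.mem_univ _, rfl⟩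
  convert hli using 1
  ext i
  fin_cases i <;> rfl

theorem card_independentPairs_le [Fintype F] :
    (independentPairs φ).card ≤
      ∑ m : K, (Fintype.card F ^ weight φ m - 1) *
        (Fintype.card F ^ weight φ m - Fintype.card F) := by
  classical
  rw [Finset.card_eq_sum_card_fiberwise (f := fun x => φ x.1 / x.1) (t := Finset.univ)
    fun _ _ => Finset.mem_coe.2 (Finset.mem_univ _)]
  exact Finset.sum_le_sum fun m _ => card_filter_independentPairs_le m

lemma sum_comp_eq_sum_Icc {ι : Type*} [Fintype ι] {w : ι → ℕ} {n : ℕ} (hw : ∀ m, w m < n)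
    {g : ℕ → ℝ} (hg : g 0 = 0) :
    ∑ m, g (w m) = ∑ i ∈ Finset.Icc 1 (n - 1), Nat.card {m // w m = i} * g i := by
  classical
  rw [← Finset.sum_fiberwise_of_maps_to (t := Finset.range n)
    fun m _ => Finset.mem_range.2 (hw m)]
  have hfib : ∀ i, ∑ m with w m = i, g (w m) = Nat.card {m // w m = i} * g i := fun i => by
    rw [Finset.sum_congr rfl fun m hm => congrArg g (Finset.mem_filter.1 hm).2, Finset.sum_const,
      nsmul_eq_mul, Nat.card_eq_fintype_card, Fintype.card_subtype]
  simp_rw [hfib]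
  refine (Finset.sum_subset (fun i hi => ?_) fun i hi hi' => ?_).symm
  · rw [Finset.mem_Icc] at hi
    exact Finset.mem_range.2 (by lia)
  · rw [Finset.mem_range] at hi
    rw [Finset.mem_Icc] at hi'
    obtain rfl : i = 0 := by lia
    rw [hg, mul_zero]

theorem card_independentPairs_le_sum_Icc [Fintype F] {n : ℕ} (hn : ∀ m, weight φ m < n) :
    ((independentPairs φ).card : ℝ) ≤ ∑ i ∈ Finset.Icc 1 (n - 1),
      Nat.card {m // weight φ m = i} *
        (((Fintype.card F : ℝ) ^ i - 1) * ((Fintype.card F : ℝ) ^ i - Fintype.card F)) := by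
  rw [← sum_comp_eq_sum_Icc hn (by simp)]
  refine (Nat.cast_le.2 card_independentPairs_le).trans_eq ?_
  rw [Nat.cast_sum]
  refine Finset.sum_congr rfl fun m _ => ?_
  rcases eq_or_ne (weight φ m) 0 with h | h
  · simp [h]
  · have h1 : 1 ≤ Fintype.card F ^ weight φ m := Nat.one_le_pow _ _ Fintype.card_pos
    have h2 : Fintype.card F ≤ Fintype.card F ^ weight φ m := Nat.le_self_pow h _
    push_cast [h1, h2]
    rfl

end Weight

section LinearizedPolynomial

variable {K : Type*} [Field K]

lemma natCard_linearized_eq_mul_le {q k : ℕ} (hq : 1 < q) (hk : k ≠ 0) {a : ℕ → K}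
    (ha : a k = 1) (m : K) :
    Nat.card {x : K // ∑ j ∈ Finset.range (k + 1), a j * x ^ q ^ j = m * x} ≤ q ^ k := by
  set P : K[X] := ∑ j ∈ Finset.range k, C (a j) * X ^ q ^ j - C m * X ^ 1
  have hP : P.degree < (q ^ k : ℕ) := by
    refine mem_degreeLT.1 (sub_mem (sum_mem fun j hj => ?_) ?_) <;> rw [mem_degreeLT]
    · exact (degree_C_mul_X_pow_le _ _).trans_lt
        (mod_cast Nat.pow_lt_pow_right hq (Finset.mem_range.1 hj))
    · exact (degree_C_mul_X_pow_le _ _).trans_lt (mod_cast Nat.one_lt_pow hk hq)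
  have hmonic : (X ^ q ^ k + P).Monic := monic_X_pow_add hP
  have hdeg : (X ^ q ^ k + P).natDegree = q ^ k := by
    rw [natDegree_add_eq_left_of_degree_lt (by rwa [degree_X_pow]), natDegree_X_pow]
  have hroot (x : K) : (X ^ q ^ k + P).IsRoot x ↔
      ∑ j ∈ Finset.range (k + 1), a j * x ^ q ^ j = m * x := by
    simp [P, Finset.sum_range_succ, eval_finsetSum, ha, ← sub_eq_zero (b := m * x)]
    ring_nf
  classical
  calc Nat.card {x : K // ∑ j ∈ Finset.range (k + 1), a j * x ^ q ^ j = m * x}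
      = Nat.card (X ^ q ^ k + P).roots.toFinset := Nat.card_congr
        (Equiv.subtypeEquivRight fun x => by
          rw [Multiset.mem_toFinset, mem_roots hmonic.ne_zero, hroot])
    _ ≤ q ^ k := by
        rw [Nat.card_eq_finsetCard]
        exact (Multiset.toFinset_card_le _).trans ((card_roots' _).trans_eq hdeg)

variable (F : Type*) [Field F] [Fintype F] [Algebra F K]

/-- The `F`-linear map `x ↦ ∑ a j * x ^ #F ^ j` of the linearized polynomial with coefficients
`a 0, …, a k`. -/
noncomputable def linearizedMap (a : ℕ → K) (k : ℕ) : K →ₗ[F] K :=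
  ∑ j ∈ Finset.range (k + 1), a j • (FiniteField.frobeniusAlgHom F K ^ j).toLinearMap

lemma linearizedMap_apply (a : ℕ → K) (k : ℕ) (x : K) :
    linearizedMap F a k x = ∑ j ∈ Finset.range (k + 1), a j * x ^ Fintype.card F ^ j := by
  simp [linearizedMap, AlgHom.coe_pow, FiniteField.coe_frobeniusAlgHom, pow_iterate]

lemma weight_linearizedMap_le [Finite K] {a : ℕ → K} {k : ℕ} (ha : a k = 1) (hk : k ≠ 0)
    (m : K) : weight (linearizedMap F a k) m ≤ k := by
  have hF : 1 < Fintype.card F := Fintype.one_lt_card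
  rw [← Nat.pow_le_pow_iff_right hF, ← natCard_eq_pow_weight]
  simp_rw [linearizedMap_apply]
  exact natCard_linearized_eq_mul_le hF hk ha m

lemma exists_algebra_card_eq [Finite K] {p e n : ℕ} [Fact p.Prime] [CharP K p] (he : e ≠ 0)
    (hK : Nat.card K = (p ^ e) ^ n) :
    ∃ (F : Type) (_ : Field F) (_ : Fintype F) (_ : Algebra F K), Fintype.card F = p ^ e := by
  let _ : Algebra (ZMod p) K := ZMod.algebra K p
  have hfin : Module.finrank (ZMod p) K = e * n := by
    have := Module.natCard_eq_pow_finrank (K := ZMod p) (V := K)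
    rw [hK, Nat.card_zmod, ← pow_mul] at this
    exact (Nat.pow_right_injective (Fact.out : p.Prime).two_le this).symm
  obtain ⟨φ⟩ := FiniteField.nonempty_algHom_of_finrank_dvd (F := ZMod p) (K := GaloisField p e)
    (L := K) (by rw [hfin, GaloisField.finrank p he]; exact dvd_mul_right _ _)
  refine ⟨GaloisField p e, inferInstance, Fintype.ofFinite _, φ.toRingHom.toAlgebra, ?_⟩
  rw [Fintype.card_eq_nat_card, GaloisField.card p e he]

end LinearizedPolynomial

section Substitution

variable {K : Type*} [Field K] {q r : ℕ} {c : ℕ → K}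

lemma sum_mul_inv_pow_mul (hq : 0 < q) {z : K} (hz : z ≠ 0) (g : ℕ → K) :
    ∑ i ∈ Finset.range (r + 1), c i * z⁻¹ ^ q ^ i * g i =
      z⁻¹ ^ q ^ r * ∑ i ∈ Finset.range (r + 1), c i * z ^ (q ^ r - q ^ i) * g i := by
  rw [Finset.mul_sum]
  refine Finset.sum_congr rfl fun i hi => ?_
  have hir : q ^ i ≤ q ^ r := Nat.pow_le_pow_right hq (Finset.mem_range_succ_iff.1 hi)
  have : z⁻¹ ^ q ^ r * z ^ (q ^ r - q ^ i) = z⁻¹ ^ q ^ i := by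
    rw [pow_sub₀ _ hz hir, inv_pow, inv_mul_cancel_left₀ (pow_ne_zero _ hz), inv_pow]
  rw [← this]; ring

lemma card_le_card_unramifiedFibres_add [Fintype K] (hq : 0 < q) :
    Fintype.card K ≤ (unramifiedFibres q r c).card +
      Nat.card {x : K // ∑ i ∈ Finset.range (r + 1), c i * x ^ q ^ i = 0} := by
  classical
  rw [Nat.card_eq_fintype_card, Fintype.card_subtype, ← Finset.card_univ,
    ← Finset.card_inter_add_card_sdiff Finset.univ (unramifiedFibres q r c), Finset.univ_inter]
  refine Nat.add_le_add_left (Finset.card_le_card_of_injOn (·⁻¹) (fun z hz => ?_)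
    inv_injective.injOn) _
  rw [Finset.mem_coe, Finset.mem_sdiff, mem_unramifiedFibres] at hz
  refine Finset.mem_coe.2 (Finset.mem_filter.2 ⟨Finset.mem_univ _, ?_⟩)
  rcases eq_or_ne z 0 with rfl | hz0
  · exact Finset.sum_eq_zero fun i _ => by simp [hq.ne']
  · have hsum : ∑ i ∈ Finset.range (r + 1), c i * z ^ (q ^ r - q ^ i) = 0 :=
      by_contra fun h => hz.2 ⟨hz0, h⟩
    simpa [hsum] using sum_mul_inv_pow_mul (c := c) (r := r) hq hz0 1

variable {F : Type*} [Field F] [Algebra F K] {φ : K →ₗ[F] K} {p e v : ℕ}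
  [Fact p.Prime] [CharP K p]

lemma apply_eq_sum_pow (hq : q = p ^ e)
    (hφ : ∀ x, φ x = ∑ i ∈ Finset.range (r + 1), c i ^ q ^ v * x ^ q ^ (v + i)) (x : K) :
    φ x = (∑ i ∈ Finset.range (r + 1), c i * x ^ q ^ i) ^ q ^ v := by
  subst hq
  rw [hφ, ← pow_mul, sum_pow_char_pow]
  refine Finset.sum_congr rfl fun i _ => ?_
  ring

lemma natCard_apply_eq_zero (hq : q = p ^ e)
    (hφ : ∀ x, φ x = ∑ i ∈ Finset.range (r + 1), c i ^ q ^ v * x ^ q ^ (v + i)) :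
    Nat.card {x : K // φ x = 0} =
      Nat.card {x : K // ∑ i ∈ Finset.range (r + 1), c i * x ^ q ^ i = 0} := by
  have hq0 : 0 < q := hq ▸ pow_pos (Fact.out : p.Prime).pos e
  exact Nat.card_congr (Equiv.subtypeEquivRight fun x => by
    rw [apply_eq_sum_pow hq hφ, pow_eq_zero_iff (by positivity)])

lemma natCard_apply_eq_zero_le (hq : q = p ^ e) (he : e ≠ 0) (hr : r ≠ 0) (hc : c r = 1)
    (hφ : ∀ x, φ x = ∑ i ∈ Finset.range (r + 1), c i ^ q ^ v * x ^ q ^ (v + i)) :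
    Nat.card {x : K // φ x = 0} ≤ q ^ r := by
  rw [natCard_apply_eq_zero hq hφ]
  simpa using natCard_linearized_eq_mul_le (one_lt_of_eq_pow hq he) hr hc 0

variable [Fintype K]

lemma apply_eq_mul_of_mem_rationalPoints (hq : q = p ^ e)
    (hφ : ∀ x, φ x = ∑ i ∈ Finset.range (r + 1), c i ^ q ^ v * x ^ q ^ (v + i)) {z t : K}
    (h : (z, t) ∈ rationalPoints q v r c) :
    φ (t ^ q ^ v * z⁻¹) = t ^ q ^ v * φ z⁻¹ := by
  obtain ⟨hz, -, hsum⟩ := mem_rationalPoints.1 h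
  have hq0 : 0 < q := hq ▸ pow_pos (Fact.out : p.Prime).pos e
  have h0 : ∑ i ∈ Finset.range (r + 1), c i * z⁻¹ ^ q ^ i * (t ^ q ^ (v + i) - t) = 0 := by
    rw [sum_mul_inv_pow_mul hq0 (mem_unramifiedFibres.1 hz).1, hsum, mul_zero]
  have hv : q ^ v = p ^ (e * v) := by rw [hq, pow_mul]
  rw [← sub_eq_zero, hφ, hφ, Finset.mul_sum, ← Finset.sum_sub_distrib]
  calc _ = (∑ i ∈ Finset.range (r + 1), c i * z⁻¹ ^ q ^ i * (t ^ q ^ (v + i) - t)) ^ q ^ v := by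
        rw [hv, sum_pow_char_pow]
        refine Finset.sum_congr rfl fun i _ => ?_
        rw [mul_pow (c i * _), sub_pow_char_pow, ← hv]
        ring
    _ = 0 := by rw [h0, zero_pow (by positivity)]

theorem card_rationalPoints_le_card_independentPairs (hq : q = p ^ e)
    (hφ : ∀ x, φ x = ∑ i ∈ Finset.range (r + 1), c i ^ q ^ v * x ^ q ^ (v + i))
    (hF : ∀ u : F, u ^ q = u) :
    (rationalPoints q v r c).card ≤ (independentPairs φ).card := by
  have hinj : Function.Injective fun t : K => t ^ q ^ v := by
    rw [hq, ← pow_mul]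
    exact iterateFrobenius_inj K p (e * v)
  refine Finset.card_le_card_of_injOn (fun x => (x.1⁻¹, x.2 ^ q ^ v * x.1⁻¹)) (fun x hx => ?_)
    fun x hx x' _ hxx' => ?_
  · obtain ⟨hz, ht, -⟩ := mem_rationalPoints.1 hx
    refine mk_mul_mem_independentPairs hF (inv_ne_zero (mem_unramifiedFibres.1 hz).1)
      (fun h => ht (hinj ?_)) (apply_eq_mul_of_mem_rationalPoints hq hφ hx)
    simpa only [pow_right_comm _ q] using h
  · rw [Prod.mk.injEq] at hxx'
    have hz : x.1 = x'.1 := inv_injective hxx'.1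
    rw [← hz] at hxx'
    exact Prod.ext hz (hinj (mul_right_cancel₀
      (inv_ne_zero (mem_unramifiedFibres.1 (mem_rationalPoints.1 hx).1).1) hxx'.2))

theorem le_card_independentPairs_of_sum {m : ℕ} (hq : q = p ^ e) (he : e ≠ 0) (hv : v ≠ 0)
    (hr : r ≠ 0) (hc : c r = 1) (hgcd : ∀ g, (∀ i ≤ r, c i ≠ 0 → g ∣ v + i) → g = 1)
    (hcardK : Fintype.card K = p ^ m) (hex : ¬(q = 2 ∧ v = 1 ∧ r = 1))
    (hφ : ∀ x, φ x = ∑ i ∈ Finset.range (r + 1), c i ^ q ^ v * x ^ q ^ (v + i))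
    (hF : ∀ u : F, u ^ q = u) {R : ℝ} (hR0 : 0 < R) (hR : R ^ 2 = (p : ℝ) ^ m)
    (hE : ((q : ℝ) ^ (v + r) - q - 1) * ((q : ℝ) ^ (v + r) - q - 2) < R) :
    (p : ℝ) ^ m - ((q : ℝ) ^ (v + r) - q - 1) * ((q : ℝ) ^ (v + r) - q - 2) * R - 2 * q ^ r
      - q ^ (v + r) + (q - 1) * Nat.card {x : K // φ x = 0} + 1 ≤ (independentPairs φ).card := by
  refine (le_card_rationalPoints hq he hv hr hc hgcd hcardK hex ?_
    (natCard_apply_eq_zero_le hq he hr hc hφ) hR0 hR hE).trans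
    (mod_cast card_rationalPoints_le_card_independentPairs hq hφ hF)
  rw [natCard_apply_eq_zero hq hφ, ← hcardK]
  exact card_le_card_unramifiedFibres_add (one_lt_of_eq_pow hq he).le

-- Every `t` with `t ^ 4 ≠ t` gives a pair `(x, t * x)` with `x ^ 2 = b / (t ^ 2 + t + 1)`.
theorem card_le_card_independentPairs_add_four [CharP K 2] (hF : ∀ u : F, u ^ 2 = u) {b : K}
    (hb : b ≠ 0) (hφ : ∀ x, φ x = b * x ^ 2 + x ^ 4) :
    Fintype.card K ≤ (independentPairs φ).card + 4 := by
  classical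
  have h2 : (2 : K) = 0 := CharTwo.two_eq_zero
  set U : Finset K := {t | t ^ 4 ≠ t} with hU
  have hfactor (t : K) : t ^ 4 - t = (t ^ 2 - t) * (t ^ 2 + t + 1) := by ring
  choose s hs using fun t : K => (bijective_frobenius K 2).2 (b / (t ^ 2 + t + 1))
  simp only [frobenius_def] at hs
  have hUne {t : K} (ht : t ∈ U) : t ^ 2 - t ≠ 0 ∧ t ^ 2 + t + 1 ≠ 0 :=
    mul_ne_zero_iff.1 (hfactor t ▸ sub_ne_zero.2 (Finset.mem_filter.1 ht).2)
  have hs0 {t : K} (ht : t ∈ U) : s t ≠ 0 := fun h =>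
    div_ne_zero hb (hUne ht).2 (by rw [← hs, h, zero_pow two_ne_zero])
  have hcompl : Uᶜ.card ≤ 4 := by
    refine (card_le_degree_of_subset_roots (p := X ^ 4 - X) fun t ht => ?_).trans_eq
      (FiniteField.X_pow_card_sub_X_natDegree_eq K (by simp))
    rw [mem_roots (FiniteField.X_pow_card_sub_X_ne_zero K (by simp))]
    simpa [hU, sub_eq_zero] using ht
  rw [← Finset.card_add_card_compl U]
  refine Nat.add_le_add (Finset.card_le_card_of_injOn (fun t => (s t, t * s t))
    (fun t ht => ?_) fun t ht t' _ htt' => ?_) hcompl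
  · refine mk_mul_mem_independentPairs hF (hs0 ht) (sub_ne_zero.1 (hUne ht).1) ?_
    have hst : s t ^ 2 * (t ^ 2 + t + 1) = b := by rw [hs, div_mul_cancel₀ _ (hUne ht).2]
    rw [hφ, hφ, ← hst]
    linear_combination s t ^ 4 * (t ^ 4 - t) * h2
  · rw [Prod.mk.injEq] at htt'
    rw [← htt'.1] at htt'
    exact mul_right_cancel₀ (hs0 ht) htt'.2

end Substitution

section ReductionToCoprimeExponents

variable {K : Type*} [Field K] {a : ℕ → K} {v k : ℕ}

lemma exists_support_eq_mul_add (hv0 : v ≠ 0) (hvk : v < k) (hv : a v ≠ 0)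
    (hmin : ∀ j < v, a j = 0) (hk : a k ≠ 0) :
    ∃ δ w r : ℕ, δ ≠ 0 ∧ w ≠ 0 ∧ r ≠ 0 ∧ v = δ * w ∧ k = δ * (w + r) ∧
      (∀ j ≤ k, a j ≠ 0 → ∃ i ≤ r, j = δ * (w + i)) ∧
      ∀ g, (∀ i ≤ r, a (δ * (w + i)) ≠ 0 → g ∣ w + i) → g = 1 := by
  classical
  set T : Finset ℕ := {j ∈ Finset.range (k + 1) | a j ≠ 0}
  set δ := T.gcd id
  have mem_T {j : ℕ} (hjk : j ≤ k) (hj : a j ≠ 0) : j ∈ T :=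
    Finset.mem_filter.2 ⟨Finset.mem_range_succ_iff.2 hjk, hj⟩
  obtain ⟨w, hw⟩ : δ ∣ v := Finset.gcd_dvd (mem_T hvk.le hv)
  have hδ : 0 < δ := Nat.pos_of_ne_zero fun h => hv0 (by rw [hw, h, zero_mul])
  obtain ⟨l, hl⟩ : δ ∣ k := Finset.gcd_dvd (mem_T le_rfl hk)
  have hwl : w < l := lt_of_mul_lt_mul_left (hw ▸ hl ▸ hvk) hδ.le
  obtain ⟨r, rfl⟩ := Nat.exists_eq_add_of_le hwl.le
  have hsupport : ∀ j ≤ k, a j ≠ 0 → ∃ i ≤ r, j = δ * (w + i) := by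
    intro j hjk hj
    obtain ⟨l, rfl⟩ : δ ∣ j := Finset.gcd_dvd (mem_T hjk hj)
    have hwl : w ≤ l := le_of_mul_le_mul_left (hw ▸ not_lt.1 fun h => hj (hmin _ h)) hδ
    obtain ⟨i, rfl⟩ := Nat.exists_eq_add_of_le hwl
    have : w + i ≤ w + r := le_of_mul_le_mul_left (hl ▸ hjk) hδ
    exact ⟨i, by lia, rfl⟩
  refine ⟨δ, w, r, hδ.ne', fun h => hv0 (by rw [hw, h, mul_zero]), by lia, hw, hl, hsupport,
    fun g hg => ?_⟩
  have hdvd : δ * g ∣ δ * 1 := by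
    rw [mul_one]
    refine Finset.dvd_gcd fun j hj => ?_
    obtain ⟨hjk, hj⟩ := Finset.mem_filter.1 hj
    obtain ⟨i, hi, rfl⟩ := hsupport j (Finset.mem_range_succ_iff.1 hjk) hj
    exact Nat.mul_dvd_mul_left δ (hg i hi hj)
  exact Nat.dvd_one.1 (Nat.dvd_of_mul_dvd_mul_left hδ hdvd)

lemma sum_linearized_eq_sum_mul_add {q δ w r : ℕ} (hδ : δ ≠ 0) (hk : k = δ * (w + r))
    (hsupport : ∀ j ≤ k, a j ≠ 0 → ∃ i ≤ r, j = δ * (w + i)) (x : K) :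
    ∑ j ∈ Finset.range (k + 1), a j * x ^ q ^ j =
      ∑ i ∈ Finset.range (r + 1), a (δ * (w + i)) * x ^ (q ^ δ) ^ (w + i) := by
  simp_rw [← pow_mul q]
  refine (Finset.sum_of_injOn (fun i => δ * (w + i)) (fun i _ i' _ h => ?_) (fun i hi => ?_)
    (fun j hj hj' => ?_) fun i _ => rfl).symm
  · exact Nat.add_left_cancel (Nat.eq_of_mul_eq_mul_left (Nat.pos_of_ne_zero hδ) h)
  · have hir := Finset.mem_range_succ_iff.1 (Finset.mem_coe.1 hi)
    exact Finset.mem_coe.2 (Finset.mem_range_succ_iff.2 (by simp only [hk]; gcongr))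
  · refine mul_eq_zero_of_left (by_contra fun h => hj' ?_) _
    obtain ⟨i, hi, rfl⟩ := hsupport j (Finset.mem_range_succ_iff.1 hj) h
    exact ⟨i, Finset.mem_coe.2 (Finset.mem_range_succ_iff.2 hi), rfl⟩

lemma exists_linearized_eq_sum_pow [Finite K] {p e q : ℕ} [Fact p.Prime] [CharP K p]
    (hq : q = p ^ e) (hv0 : v ≠ 0) (hvk : v < k) (hv : a v ≠ 0) (hmin : ∀ j < v, a j = 0)
    (hk : a k = 1) :
    ∃ (δ w r : ℕ) (c : ℕ → K), δ ≠ 0 ∧ w ≠ 0 ∧ r ≠ 0 ∧ v = δ * w ∧ k = δ * (w + r) ∧ c r = 1 ∧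
      (∀ g, (∀ i ≤ r, c i ≠ 0 → g ∣ w + i) → g = 1) ∧
      ∀ x : K, ∑ j ∈ Finset.range (k + 1), a j * x ^ q ^ j =
        ∑ i ∈ Finset.range (r + 1), c i ^ (q ^ δ) ^ w * x ^ (q ^ δ) ^ (w + i) := by
  obtain ⟨δ, w, r, hδ, hw, hr, hvδ, hkδ, hsupport, hgcd⟩ :=
    exists_support_eq_mul_add hv0 hvk hv hmin (by rw [hk]; exact one_ne_zero)
  have hfrob : Function.Bijective fun x : K => x ^ (q ^ δ) ^ w := by
    rw [hq, ← pow_mul, ← pow_mul]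
    exact bijective_iterateFrobenius K p _
  choose c hc using fun i => hfrob.2 (a (δ * (w + i)))
  simp only at hc
  have hc0 {i : ℕ} (hi : a (δ * (w + i)) ≠ 0) : c i ≠ 0 := fun h => by
    have hq0 : 0 < q := hq ▸ pow_pos (Fact.out : p.Prime).pos e
    exact hi (by rw [← hc, h, zero_pow (by positivity)])
  refine ⟨δ, w, r, c, hδ, hw, hr, hvδ, hkδ, hfrob.1 ?_,
    fun g hg => hgcd g fun i hi h => hg i hi (hc0 h), fun x => ?_⟩
  · simp only [hc, one_pow, ← hkδ, hk]
  · simp only [hc]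
    exact sum_linearized_eq_sum_mul_add hδ hkδ hsupport x

end ReductionToCoprimeExponents

section LinearizedBound

variable {F K : Type*} [Field F] [Fintype F] [Field K] [Fintype K] [Algebra F K]
  {p e q n δ w r : ℕ} [Fact p.Prime] [CharP K p] {c : ℕ → K} {φ : K →ₗ[F] K} {R : ℝ}

lemma sub_mul_sub_le_of_sq_le {q Q D : ℝ} (hq : q ≤ Q) (hQ : 2 ≤ Q) (hD : Q ^ 2 ≤ D) :
    (D - Q - 1) * (D - Q - 2) ≤ (D - q - 1) * (D - q - 2) := by
  have : 2 ≤ D - Q := by nlinarith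
  refine mul_le_mul ?_ ?_ ?_ ?_ <;> linarith

lemma le_card_independentPairs_of_lt (hq : q = p ^ e) (he : e ≠ 0) (hF : Fintype.card F = q)
    (hK : Fintype.card K = q ^ n) (hδ : δ ≠ 0) (hw : w ≠ 0) (hr : r ≠ 0) (hc : c r = 1)
    (hgcd : ∀ g, (∀ i ≤ r, c i ≠ 0 → g ∣ w + i) → g = 1)
    (hφ : ∀ x, φ x = ∑ i ∈ Finset.range (r + 1), c i ^ (q ^ δ) ^ w * x ^ (q ^ δ) ^ (w + i))
    (hex : ¬(q ^ δ = 2 ∧ w = 1 ∧ r = 1)) (hR0 : 0 < R) (hR : R ^ 2 = (q : ℝ) ^ n) {D : ℝ}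
    (hD : D = ((q : ℝ) ^ δ) ^ (w + r)) (hE : (D - q - 1) * (D - q - 2) < R) :
    (q : ℝ) ^ n - (D - q - 1) * (D - q - 2) * R - 2 * ((q : ℝ) ^ δ) ^ r - D
      + (q - 1) * Nat.card {x : K // φ x = 0} + 1 ≤ (independentPairs φ).card := by
  have hq1 : 1 < q := one_lt_of_eq_pow hq he
  have hqQ : (q : ℝ) ≤ (q : ℝ) ^ δ := le_self_pow₀ (mod_cast hq1.le) hδ
  have hQ2 : (2 : ℝ) ≤ (q : ℝ) ^ δ := le_trans (mod_cast hq1) hqQ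
  have hQD : ((q : ℝ) ^ δ) ^ 2 ≤ D := hD ▸ pow_le_pow_right₀ (by linarith) (by lia)
  have hEE := sub_mul_sub_le_of_sq_le hqQ hQ2 hQD
  have hpm : (p : ℝ) ^ (e * n) = (q : ℝ) ^ n := by rw [hq, Nat.cast_pow, pow_mul]
  have key := le_card_independentPairs_of_sum (m := e * n) (e := e * δ) (q := q ^ δ) (R := R)
    (by rw [hq, pow_mul]) (mul_ne_zero he hδ) hw hr hc hgcd (by rw [hK, hq, pow_mul]) hex hφ
    (fun u => by rw [← hF, FiniteField.pow_card_pow]) hR0 (by rw [hR, hpm])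
    (by push_cast; rw [← hD]; exact hEE.trans_lt hE)
  push_cast at key
  rw [hpm, ← hD] at key
  have hER := mul_le_mul_of_nonneg_right hEE hR0.le
  have hκ := mul_le_mul_of_nonneg_right (sub_le_sub_right hqQ 1)
    (Nat.cast_nonneg (Nat.card {x : K // φ x = 0}))
  linarith [key]

lemma le_card_independentPairs_of_eq_two (hF : Fintype.card F = 2)
    (hK : Fintype.card K = 2 ^ n) (hc : c 1 = 1)
    (hgcd : ∀ g, (∀ i ≤ 1, c i ≠ 0 → g ∣ 1 + i) → g = 1)
    (hφ : ∀ x, φ x = ∑ i ∈ Finset.range 2, c i ^ 2 ^ 1 * x ^ 2 ^ (1 + i)) :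
    (2 : ℝ) ^ n - 8 + Nat.card {x : K // φ x = 0} + 1 ≤ (independentPairs φ).card := by
  have : CharP K 2 := charP_of_card_eq_prime_pow hK
  have hc0 : c 0 ≠ 0 := fun h => by
    have := hgcd 2 fun i hi hci => by
      interval_cases i
      · exact absurd h hci
      · norm_num
    lia
  have hker : Nat.card {x : K // φ x = 0} ≤ 2 ^ 1 :=
    natCard_apply_eq_zero_le (pow_one 2).symm one_ne_zero one_ne_zero hc hφ
  have hcard := card_le_card_independentPairs_add_four (φ := φ)
    (fun u => by rw [← hF, FiniteField.pow_card]) (pow_ne_zero 2 hc0) fun x => by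
      rw [hφ]
      simp [Finset.sum_range_succ, hc]
  rw [hK] at hcard
  have : 2 ^ n + Nat.card {x : K // φ x = 0} ≤ (independentPairs φ).card + 6 := by lia
  have : (2 : ℝ) ^ n + Nat.card {x : K // φ x = 0} ≤ (independentPairs φ).card + 6 :=
    mod_cast this
  linarith

lemma le_card_independentPairs_of_pow (hq : q = p ^ e) (he : e ≠ 0) (hF : Fintype.card F = q)
    (hK : Fintype.card K = q ^ n) (hδ : δ ≠ 0) (hw : w ≠ 0) (hr : r ≠ 0) (hc : c r = 1)
    (hgcd : ∀ g, (∀ i ≤ r, c i ≠ 0 → g ∣ w + i) → g = 1)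
    (hφ : ∀ x, φ x = ∑ i ∈ Finset.range (r + 1), c i ^ (q ^ δ) ^ w * x ^ (q ^ δ) ^ (w + i))
    (hR0 : 0 < R) (hR : R ^ 2 = (q : ℝ) ^ n) {D : ℝ} (hD : D = ((q : ℝ) ^ δ) ^ (w + r)) :
    (q : ℝ) ^ n - (D - q - 1) * (D - q - 2) * R - 2 * ((q : ℝ) ^ δ) ^ r - D
      + (q - 1) * Nat.card {x : K // φ x = 0} + 1 ≤ (independentPairs φ).card := by
  have hq1 : 1 < q := one_lt_of_eq_pow hq he
  rcases le_or_gt R ((D - q - 1) * (D - q - 2)) with hE | hE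
  · have hq1' : (1 : ℝ) < q := mod_cast hq1
    have hker : (Nat.card {x : K // φ x = 0} : ℝ) ≤ ((q : ℝ) ^ δ) ^ r := by
      exact_mod_cast natCard_apply_eq_zero_le (e := e * δ) (by rw [hq, pow_mul])
        (mul_ne_zero he hδ) hr hc hφ
    have hqD : q * ((q : ℝ) ^ δ) ^ r ≤ D := by
      rw [hD, pow_add]
      gcongr
      rw [← pow_mul]
      exact le_self_pow₀ hq1'.le (mul_ne_zero hδ hw)
    have h1 : (1 : ℝ) ≤ ((q : ℝ) ^ δ) ^ r := one_le_pow₀ (one_le_pow₀ hq1'.le)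
    have hER := mul_le_mul_of_nonneg_right hE hR0.le
    have hκ := mul_le_mul_of_nonneg_left hker (sub_nonneg.2 hq1'.le)
    have := Nat.cast_nonneg (α := ℝ) (independentPairs φ).card
    linarith
  · by_cases hex : q ^ δ = 2 ∧ w = 1 ∧ r = 1
    · obtain ⟨hQ, rfl, rfl⟩ := hex
      have hq2 : q = 2 := le_antisymm (hQ ▸ Nat.le_self_pow hδ q) hq1
      have hQ' : (q : ℝ) ^ δ = 2 := mod_cast hQ
      subst hq2
      rw [hQ] at hφ
      have := le_card_independentPairs_of_eq_two hF hK hc hgcd hφ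
      rw [hD, hQ']
      norm_num
      linarith
    · exact le_card_independentPairs_of_lt hq he hF hK hδ hw hr hc hgcd hφ hex hR0 hR hD hE

theorem le_card_independentPairs_linearizedMap {a : ℕ → K} {k v : ℕ} (hq : q = p ^ e)
    (he : e ≠ 0) (hF : Fintype.card F = q) (hK : Fintype.card K = q ^ n) (hv0 : v ≠ 0)
    (hvk : v < k) (hv : a v ≠ 0) (hmin : ∀ j < v, a j = 0) (hk : a k = 1) (hR0 : 0 < R)
    (hR : R ^ 2 = (q : ℝ) ^ n) :
    (q : ℝ) ^ n - ((q : ℝ) ^ k - q - 1) * ((q : ℝ) ^ k - q - 2) * R - 2 * q ^ (k - v) - q ^ k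
        + (q - 1) * Nat.card {x : K // linearizedMap F a k x = 0} + 1 ≤
      (independentPairs (linearizedMap F a k)).card := by
  obtain ⟨δ, w, r, c, hδ, hw, hr, rfl, rfl, hc, hgcd, hsum⟩ :=
    exists_linearized_eq_sum_pow hq hv0 hvk hv hmin hk
  have hkv : δ * (w + r) - δ * w = δ * r := by rw [mul_add, Nat.add_sub_cancel_left]
  rw [hkv, pow_mul (q : ℝ) δ r]
  exact le_card_independentPairs_of_pow hq he hF hK hδ hw hr hc hgcd
    (fun x => by rw [linearizedMap_apply, hF, ← hsum]) hR0 hR (by rw [pow_mul])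

theorem le_sum_natCard_weight_linearizedMap {a : ℕ → K} {k v : ℕ} (hq : q = p ^ e)
    (he : e ≠ 0) (hF : Fintype.card F = q) (hK : Fintype.card K = q ^ n) (hv0 : v ≠ 0)
    (hvk : v < k) (hkn : k < n) (hv : a v ≠ 0) (hmin : ∀ j < v, a j = 0) (hk : a k = 1) :
    (q : ℝ) ^ n - ((q : ℝ) ^ k - q - 1) * ((q : ℝ) ^ k - q - 2) * √((q : ℝ) ^ n)
        - 2 * q ^ (k - v) - q ^ k + (q - 1) * q ^ weight (linearizedMap F a k) 0 + 1 ≤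
      ∑ i ∈ Finset.Icc 1 (n - 1), Nat.card {m : K // weight (linearizedMap F a k) m = i} *
        (((q : ℝ) ^ i - 1) * ((q : ℝ) ^ i - q)) := by
  have hqn : (0 : ℝ) < (q : ℝ) ^ n := pow_pos (mod_cast (one_lt_of_eq_pow hq he).le) n
  have hbound := le_card_independentPairs_linearizedMap hq he hF hK hv0 hvk hv hmin hk
    (Real.sqrt_pos.2 hqn) (Real.sq_sqrt hqn.le)
  have hker : Nat.card {x : K // linearizedMap F a k x = 0} =
      q ^ weight (linearizedMap F a k) 0 := by
    simpa only [zero_mul, hF] using natCard_eq_pow_weight (φ := linearizedMap F a k) 0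
  have hsum := card_independentPairs_le_sum_Icc fun m =>
    (weight_linearizedMap_le F hk (by lia) m).trans_lt hkn
  rw [hker, Nat.cast_pow] at hbound
  rw [hF] at hsum
  exact hbound.trans hsum

end LinearizedBound

end Stepanov

open Stepanov

/-- Hasse–Weil type lower bound on the weight distribution of a monic
non-monomial `q`-polynomial of index `t = 0` (Theorem `Th:Curve`, case `t = 0`).
Here `K = F_{q^n}`, the weight of `m ∈ K` is `dim_{F_q} ker (f - m·x)`, encoded as
`Nat.log q` of the cardinality of the kernel (the kernel is an `F_q`-subspace, so its
cardinality is `q^dim`). -/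
theorem stmt_0 (p e q n k : ℕ) (hp : p.Prime) (he : 1 ≤ e) (hq : q = p ^ e)
    (hk1 : 1 ≤ k) (hkn : k < n)
    (K : Type) [Field K] [Fintype K] (hcard : Fintype.card K = q ^ n)
    (a : ℕ → K) (hmonic : a k = 1) (ha0 : a 0 = 0)
    (hnotmono : ∃ j, j < k ∧ a j ≠ 0)
    (f : K → K) (hf : f = fun x => ∑ j ∈ Finset.range (k + 1), a j * x ^ q ^ j)
    (v : ℕ) (hv : a v ≠ 0) (hvmin : ∀ j, j < v → a j = 0)
    (h : ℕ) (hh : h = Nat.log q (Nat.card {x : K // f x = 0}))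
    (N : ℕ → ℕ)
    (hN : ∀ i, N i = Nat.card {m : K // Nat.log q (Nat.card {x : K // f x = m * x}) = i}) :
    (∑ i ∈ Finset.Icc 1 (n - 1), (N i : ℝ) * ((q : ℝ) ^ i - 1) * ((q : ℝ) ^ i - (q : ℝ)))
      ≥ (q : ℝ) ^ n
        - ((q : ℝ) ^ k - (q : ℝ) - 1) * ((q : ℝ) ^ k - (q : ℝ) - 2) * Real.sqrt ((q : ℝ) ^ n)
        - 2 * (q : ℝ) ^ (k - v) - (q : ℝ) ^ k + (q : ℝ) ^ (h + 1) - (q : ℝ) ^ h + 1 := by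
  have : Fact p.Prime := ⟨hp⟩
  have : CharP K p := charP_of_card_eq_prime_pow (f := e * n) (by rw [hcard, hq, pow_mul])
  obtain ⟨F, _, _, _, hF⟩ := exists_algebra_card_eq (K := K) (p := p) (e := e) (n := n)
    (by lia) (by rw [Nat.card_eq_fintype_card, hcard, hq])
  rw [← hq] at hF
  have hf' : f = linearizedMap F a k := funext fun x => by rw [hf, linearizedMap_apply, hF]
  have hlog (m : K) : Nat.log q (Nat.card {x : K // f x = m * x}) =
      weight (linearizedMap F a k) m := by rw [hf', ← hF, log_natCard_eq_weight]
  have hh0 : weight (linearizedMap F a k) 0 = h := by simp [hh, ← hlog]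
  have hv0 : v ≠ 0 := fun h0 => hv (h0 ▸ ha0)
  have hvk : v < k := by
    obtain ⟨j, hjk, hj⟩ := hnotmono
    exact (not_lt.1 fun hjv => hj (hvmin j hjv)).trans_lt hjk
  have hbound := le_sum_natCard_weight_linearizedMap hq (by lia) hF hcard hv0 hvk hkn hv hvmin
    hmonic
  rw [hh0] at hbound
  simp_rw [hN, hlog, mul_assoc _ ((q : ℝ) ^ _ - 1)]
  rw [pow_succ', ge_iff_le]
  linarith
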